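/- arXiv:2406.03444 — 2 statements merged into one kernel-verified Lean document; each statement's English description precedes it below -/
import Mathlib

section
/- Let Φ be a Φ-function (i.e. weak Φ-function, Φ ∈ Φ_w) with Φ ∈ (Dec)_q for some q ∈ [1, ∞). Then there exists a constant C depending only on Φ such that for every N ≥ 1, H ≥ 1, every N-dimensional subspace X_N ⊂ C(Ω) with X_N ∈ NI_{2,∞}(H), and every ε ∈ (0, 1/2], there are m points x₁, …, x_m ∈ Ω with m ≤ C·ε^{-2}·(log ε^{-1})·Φ(H²)·(log 2N)²·log 2H² such that a_Φ(1)^{-2}(1−ε)‖f‖_Φ ≤ ‖f‖_{Φ,x} ≤ a_Φ(1)²(1+ε)‖f‖_Φ for all f ∈ X_N. -/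
open MeasureTheory

noncomputable section

/-- The sup-norm (uniform norm) `‖f‖_∞ = sup_{x ∈ Ω} |f x|` of a real-valued function. -/
def supNorm {Ω : Type*} (f : Ω → ℝ) : ℝ := ⨆ x, |f x|

/-- The Luxemburg functional `‖f‖_Φ = inf {λ > 0 : ∫ Φ(|f|/λ) dμ ≤ 1}`. -/
def luxNorm {Ω : Type*} [MeasurableSpace Ω] (μ : Measure Ω) (Φ : ℝ → ℝ) (f : Ω → ℝ) : ℝ :=
  sInf {lam : ℝ | 0 < lam ∧ ∫ x, Φ (|f x| / lam) ∂μ ≤ 1}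

/-- The discrete Luxemburg functional `‖f‖_{Φ,x}` with respect to the uniform discrete
probability measure `(1/m) ∑_{j=1}^m δ_{x_j}`. -/
def discLuxNorm {Ω : Type*} (Φ : ℝ → ℝ) {m : ℕ} (x : Fin m → Ω) (f : Ω → ℝ) : ℝ :=
  sInf {lam : ℝ | 0 < lam ∧ (∑ j, Φ (|f (x j)| / lam)) / (m : ℝ) ≤ 1}

/-- The weighted discrete Luxemburg functional `‖f‖_{Φ,x,λ}` with respect to the discrete
probability measure `∑_{j=1}^m λ_j δ_{x_j}`. -/
def wDiscLuxNorm {Ω : Type*} (Φ : ℝ → ℝ) {m : ℕ} (x : Fin m → Ω) (w : Fin m → ℝ)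
    (f : Ω → ℝ) : ℝ :=
  sInf {lam : ℝ | 0 < lam ∧ (∑ j, w j * Φ (|f (x j)| / lam)) ≤ 1}

/-- `Φ : [0,∞) → [0,∞)` is a Φ-prefunction: increasing, `Φ(0) = 0`, `Φ(0+) = 0`,
`Φ(∞) = ∞` (stated for a function on `ℝ`, with the relevant conditions on `[0,∞)`). -/
structure IsPhiPrefun (Φ : ℝ → ℝ) : Prop where
  mono : MonotoneOn Φ (Set.Ici 0)
  map_zero : Φ 0 = 0
  nonneg : ∀ t : ℝ, 0 ≤ t → 0 ≤ Φ t
  tendsto_zero : Filter.Tendsto Φ (nhdsWithin 0 (Set.Ioi 0)) (nhds 0)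
  tendsto_atTop : Filter.Tendsto Φ Filter.atTop Filter.atTop

/-- `Φ ∈ (aInc)_p` with constant `a`: `t ↦ Φ(t) t^{-p}` is almost increasing on `(0,∞)`. -/
def AIncP (Φ : ℝ → ℝ) (p a : ℝ) : Prop :=
  ∀ s t : ℝ, 0 < s → s < t → Φ s / s ^ p ≤ a * (Φ t / t ^ p)

/-- `Φ ∈ (Inc)_p` : `t ↦ Φ(t) t^{-p}` is increasing on `(0,∞)`. -/
def IncP (Φ : ℝ → ℝ) (p : ℝ) : Prop :=
  ∀ s t : ℝ, 0 < s → s < t → Φ s / s ^ p ≤ Φ t / t ^ p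

/-- `Φ ∈ (Dec)_q` : `t ↦ Φ(t) t^{-q}` is decreasing on `(0,∞)`. -/
def DecQ (Φ : ℝ → ℝ) (q : ℝ) : Prop :=
  ∀ s t : ℝ, 0 < s → s < t → Φ t / t ^ q ≤ Φ s / s ^ q

/-- `Φ ∈ (aDec)_q` with constant `b`: `t ↦ Φ(t) t^{-q}` is almost decreasing on `(0,∞)`. -/
def ADecQ (Φ : ℝ → ℝ) (q b : ℝ) : Prop :=
  ∀ s t : ℝ, 0 < s → s < t → Φ t / t ^ q ≤ b * (Φ s / s ^ q)

/-- `t ↦ Φ(t) t^{-p}` is almost increasing with constant `a` on `(t_*, ∞)`. -/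
def AIncPOn (Φ : ℝ → ℝ) (p a tstar : ℝ) : Prop :=
  ∀ s t : ℝ, tstar < s → s < t → Φ s / s ^ p ≤ a * (Φ t / t ^ p)

/-- `t ↦ Φ(t) t^{-q}` is almost decreasing with constant `b` on `(t_*, ∞)`. -/
def ADecQOn (Φ : ℝ → ℝ) (q b tstar : ℝ) : Prop :=
  ∀ s t : ℝ, tstar < s → s < t → Φ t / t ^ q ≤ b * (Φ s / s ^ q)

/-- Entropy numbers `e_n(F, d)` of a set `F` with respect to a distance-like function `dd`:
the infimum of `ε > 0` such that `F` can be covered by `2^{2^n}` (one, for `n = 0`)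
`ε`-balls centered in `F`. -/
def entropyNumD {X : Type*} (dd : X → X → ℝ) (F : Set X) (n : ℕ) : ℝ :=
  sInf {ε : ℝ | 0 < ε ∧ ∃ T : Finset X, ↑T ⊆ F ∧
    T.card ≤ (if n = 0 then 1 else 2 ^ 2 ^ n) ∧ ∀ f ∈ F, ∃ g ∈ T, dd f g < ε}

/-- Sampling numbers `ϱ_m(F, ‖·‖)`: recovery by linear methods from samples at `m` points. -/
def sampNum {Ω : Type*} (nrm : (Ω → ℝ) → ℝ) (F : Set (Ω → ℝ)) (m : ℕ) : ℝ :=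
  sInf {r : ℝ | ∃ (x : Fin m → Ω) (T : (Fin m → ℝ) →ₗ[ℝ] (Ω → ℝ)),
    r = ⨆ f ∈ F, nrm (fun y => f y - T (fun j => f (x j)) y)}

/-- Modified sampling numbers `ϱ*_m(F, ‖·‖)`: recovery by arbitrary methods mapping into a
subspace of dimension at most `m`, from samples at `m` points. -/
def sampNumStar {Ω : Type*} (nrm : (Ω → ℝ) → ℝ) (F : Set (Ω → ℝ)) (m : ℕ) : ℝ :=
  sInf {r : ℝ | ∃ (x : Fin m → Ω) (Y : Submodule ℝ (Ω → ℝ)), Module.finrank ℝ Y ≤ m ∧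
    ∃ T : (Fin m → ℝ) → Ω → ℝ, (∀ v, T v ∈ Y) ∧
    r = ⨆ f ∈ F, nrm (fun y => f y - T (fun j => f (x j)) y)}

/-- Kolmogorov width `d_N(F, ‖·‖_∞)` : infimum over `N`-dimensional subspaces of `C(Ω)` of the
worst-case best approximation error in the uniform norm. -/
def kolWidth {Ω : Type*} [TopologicalSpace Ω] (F : Set (Ω → ℝ)) (N : ℕ) : ℝ :=
  sInf {r : ℝ | ∃ X : Submodule ℝ (Ω → ℝ), Module.finrank ℝ X = N ∧
    (∀ u ∈ X, Continuous u) ∧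
    r = ⨆ f ∈ F, sInf ((fun u => supNorm (fun y => f y - u y)) '' (X : Set (Ω → ℝ)))}

end

/-!
Almost monotonicity makes the Luxemburg functional determined, up to the constant `a_Φ(1)`, by the
values of the modular `∫ Φ(|f|/l) dμ` near the unit level, and `(Dec)_q` bounds the modular by `2^q`
at half the critical scale. It therefore suffices to discretize `∫ Φ(|f|) dμ` with a small additive
error, uniformly over the functions of `X` whose modular is at most `V = 2^q`.

By the Nikolskii inequality, the point evaluations of `X` form a continuous Parseval frame bounded
by `H`; in particular `dim X ≤ H²`, and the functions of modular at most `V` are bounded by a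
multiple of `H²`. The modular is discretized in two stages.
* A union bound with Bernstein's inequality over one volumetric net gives `M` random points that
  discretize both the modular and the `L²` norm. Here `M` is polynomial in `H` and `ε⁻¹`.
* On these `M` points `X` is again represented by a bounded Parseval frame. Maurey's empirical
  method and the dual Sudakov inequality yield uniform nets whose entropy costs only `log M`; below
  the scale where the dimension takes over, volumetric nets are used. Chaining along these nets,
  with Bernstein's inequality applied to the increments, gives the final number of points. The
  factor `(log 2N)²` comes from the `log N` scales among which the error is distributed.
-/

/-! ### Growth of weak Φ-functions -/

namespace IsPhiPrefun

variable {Φ : ℝ → ℝ} {Ω : Type*} [MeasurableSpace Ω] {f : Ω → ℝ}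

theorem le_of_le (hΦ : IsPhiPrefun Φ) {s t : ℝ} (hs : 0 ≤ s) (hst : s ≤ t) : Φ s ≤ Φ t :=
  hΦ.mono hs (hs.trans hst) hst

theorem measurable_comp_abs (hΦ : IsPhiPrefun Φ) (hf : Measurable f) :
    Measurable fun x => Φ |f x| := by
  have hmono : Monotone fun t : ℝ => Φ (max 0 t) := fun s t hst =>
    hΦ.le_of_le (le_max_left _ _) (max_le_max le_rfl hst)
  simpa [Function.comp_def] using hmono.measurable.comp hf.abs

theorem integrable_comp_abs (hΦ : IsPhiPrefun Φ) {μ : Measure Ω} [IsFiniteMeasure μ]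
    (hf : Measurable f) {B : ℝ} (hB : ∀ x, |f x| ≤ B) : Integrable (fun x => Φ |f x|) μ := by
  refine Integrable.of_bound (hΦ.measurable_comp_abs hf).aestronglyMeasurable (Φ B) (.of_forall ?_)
  intro x
  rw [Real.norm_of_nonneg (hΦ.nonneg _ (abs_nonneg _))]
  exact hΦ.le_of_le (abs_nonneg _) (hB x)

end IsPhiPrefun

/-- `IsWeakPhi Φ a q` says that `Φ` is a weak Φ-function, `a` being an admissible constant in the
almost monotonicity of `Φ t / t`, and that `Φ ∈ (Dec)_q`. -/
structure IsWeakPhi (Φ : ℝ → ℝ) (a q : ℝ) : Prop extends IsPhiPrefun Φ where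
  one_le_a : 1 ≤ a
  aInc : AIncP Φ 1 a
  one_le_q : 1 ≤ q
  dec : DecQ Φ q

namespace IsWeakPhi

variable {Φ : ℝ → ℝ} {a q : ℝ}

theorem pow_two : IsWeakPhi (fun t => t ^ 2) 1 2 where
  mono s hs t _ hst := pow_le_pow_left₀ hs hst 2
  map_zero := by norm_num
  nonneg t _ := sq_nonneg t
  tendsto_zero := by
    have : ContinuousAt (fun t : ℝ => t ^ 2) 0 := by fun_prop
    simpa [ContinuousAt] using this.tendsto.mono_left nhdsWithin_le_nhds
  tendsto_atTop := Filter.tendsto_pow_atTop two_ne_zero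
  one_le_a := le_rfl
  aInc s t hs hst := by
    have ht : 0 < t := hs.trans hst
    simpa [sq, hs.ne', ht.ne'] using hst.le
  one_le_q := one_le_two
  dec s t hs hst := by
    have ht : 0 < t := hs.trans hst
    simp [hs.ne', ht.ne']

theorem pos (hΦ : IsWeakPhi Φ a q) {t : ℝ} (ht : 0 < t) : 0 < Φ t := by
  obtain ⟨s, hs_one, hts⟩ := ((hΦ.tendsto_atTop.eventually_ge_atTop 1).and
    (Filter.eventually_gt_atTop t)).exists
  have hquot : 0 < Φ t / t ^ q :=
    (div_pos (by linarith) (Real.rpow_pos_of_pos (ht.trans hts) q)).trans_le (hΦ.dec t s ht hts)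
  exact (div_pos_iff_of_pos_right (Real.rpow_pos_of_pos ht q)).1 hquot

theorem le_apply_mul (hΦ : IsWeakPhi Φ a q) {c t : ℝ} (hc : 1 ≤ c) (ht : 0 ≤ t) :
    Φ t ≤ a / c * Φ (c * t) := by
  have hc_pos : 0 < c := by linarith
  rcases ht.eq_or_lt with rfl | ht_pos
  · simp [hΦ.map_zero]
  rcases hc.eq_or_lt with rfl | hc_lt
  · simpa using le_mul_of_one_le_left (hΦ.nonneg t ht) hΦ.one_le_a
  · have hinc := hΦ.aInc t (c * t) ht_pos (lt_mul_of_one_lt_left ht_pos hc_lt)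
    rw [Real.rpow_one, Real.rpow_one, div_le_iff₀ ht_pos] at hinc
    exact hinc.trans_eq (by field_simp)

theorem apply_mul_le (hΦ : IsWeakPhi Φ a q) {c t : ℝ} (hc : 1 ≤ c) (ht : 0 ≤ t) :
    Φ (c * t) ≤ c ^ q * Φ t := by
  have hc_pos : 0 < c := by linarith
  rcases ht.eq_or_lt with rfl | ht_pos
  · simp [hΦ.map_zero]
  rcases hc.eq_or_lt with rfl | hc_lt
  · simp
  · have hdec := hΦ.dec t (c * t) ht_pos (lt_mul_of_one_lt_left ht_pos hc_lt)
    have hcq : 0 < c ^ q := Real.rpow_pos_of_pos hc_pos q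
    have htq : 0 < t ^ q := Real.rpow_pos_of_pos ht_pos q
    rw [Real.mul_rpow hc_pos.le ht, div_le_div_iff₀ (by positivity) htq] at hdec
    exact le_of_mul_le_mul_right (hdec.trans_eq (by ring)) htq

theorem le_one_add_mul_apply (hΦ : IsWeakPhi Φ a q) {t : ℝ} (ht : 0 ≤ t) :
    t ≤ 1 + a / Φ 1 * Φ t := by
  have ha := hΦ.one_le_a
  have hΦ1 := hΦ.pos one_pos
  have hΦt := hΦ.nonneg t ht
  rcases le_total t 1 with h | h
  · exact h.trans (le_add_of_nonneg_right (by positivity))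
  · have ht_pos : 0 < t := by linarith
    have hscale := hΦ.le_apply_mul h zero_le_one
    rw [mul_one, div_mul_eq_mul_div, le_div_iff₀ ht_pos, mul_comm] at hscale
    have : t ≤ a / Φ 1 * Φ t := by rwa [div_mul_eq_mul_div, le_div_iff₀ hΦ1]
    linarith

theorem sub_le_of_le (hΦ : IsWeakPhi Φ a q) {s t R : ℝ} (hs : 0 ≤ s) (hst : s ≤ t)
    (htR : t ≤ R) : Φ t - Φ s ≤ q * a * Φ R / R * (t - s) := by
  rcases hst.eq_or_lt with rfl | hlt
  · simp
  have ht : 0 < t := by linarith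
  have hq := hΦ.one_le_q
  have hΦt := hΦ.nonneg t ht.le
  have hdrop : Φ t - Φ s ≤ q * (1 - s / t) * Φ t := by
    rcases hs.eq_or_lt with rfl | hs_pos
    · simpa [hΦ.map_zero] using le_mul_of_one_le_left hΦt hq
    · have htq : 0 < t ^ q := Real.rpow_pos_of_pos ht q
      have hdec : (s / t) ^ q * Φ t ≤ Φ s := by
        have := hΦ.dec s t hs_pos hlt
        rw [div_le_div_iff₀ htq (Real.rpow_pos_of_pos hs_pos q)] at this
        rwa [Real.div_rpow hs ht.le, div_mul_eq_mul_div, div_le_iff₀ htq, mul_comm]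
      have hbernoulli : 1 + q * (s / t - 1) ≤ (s / t) ^ q := by
        have := one_add_mul_self_le_rpow_one_add
          (by linarith [div_nonneg hs ht.le] : -1 ≤ s / t - 1) hq
        rwa [add_sub_cancel] at this
      linarith [mul_le_mul_of_nonneg_right hbernoulli hΦt]
  have hratio : Φ t / t ≤ a * Φ R / R := by
    have := hΦ.le_apply_mul (c := R / t) (by rwa [one_le_div ht]) ht.le
    rw [div_mul_cancel₀ _ ht.ne'] at this
    rw [div_le_iff₀ ht]
    exact this.trans_eq (by field_simp)
  calc Φ t - Φ s ≤ q * (1 - s / t) * Φ t := hdrop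
    _ = q * (t - s) * (Φ t / t) := by field_simp
    _ ≤ q * (t - s) * (a * Φ R / R) :=
        mul_le_mul_of_nonneg_left hratio (mul_nonneg (by linarith) (by linarith))
    _ = _ := by ring

theorem abs_sub_le (hΦ : IsWeakPhi Φ a q) {x y R : ℝ} (hx : |x| ≤ R) (hy : |y| ≤ R) :
    |Φ (|x|) - Φ (|y|)| ≤ q * a * Φ R / R * |x - y| := by
  wlog h : |x| ≤ |y| generalizing x y
  · rw [abs_sub_comm, abs_sub_comm x]
    exact this hy hx (le_of_not_ge h)
  have hR : 0 ≤ R := (abs_nonneg x).trans hx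
  have hL : 0 ≤ q * a * Φ R / R :=
    div_nonneg (mul_nonneg (mul_nonneg (by linarith [hΦ.one_le_q]) (by linarith [hΦ.one_le_a]))
      (hΦ.nonneg R hR)) hR
  rw [abs_sub_comm, abs_sub_comm x, abs_of_nonneg (sub_nonneg.2 (hΦ.le_of_le (abs_nonneg x) h))]
  exact (hΦ.sub_le_of_le (abs_nonneg x) h hy).trans
    (mul_le_mul_of_nonneg_left (abs_sub_abs_le_abs_sub y x) hL)

end IsWeakPhi

/-! ### Sampling errors and Bernstein's inequality -/

section Sampling

open ProbabilityTheory

variable {Ω : Type*} [MeasurableSpace Ω] {μ : Measure Ω} {m : ℕ} {g h Z : Ω → ℝ}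

/-- The signed error of the empirical mean of `g` at the sample points `x` as an approximation
of `∫ g ∂μ`. -/
noncomputable def samplingError (μ : Measure Ω) (x : Fin m → Ω) (g : Ω → ℝ) : ℝ :=
  (∑ j, g (x j)) / m - ∫ y, g y ∂μ

theorem samplingError_sub (hg : Integrable g μ) (hh : Integrable h μ) (x : Fin m → Ω) :
    samplingError μ x (fun y => g y - h y) = samplingError μ x g - samplingError μ x h := by
  simp only [samplingError, integral_sub hg hh, Finset.sum_sub_distrib]
  ring

theorem samplingError_neg (x : Fin m → Ω) :
    samplingError μ x (fun y => -g y) = -samplingError μ x g := by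
  simp only [samplingError, integral_neg, Finset.sum_neg_distrib]
  ring

theorem samplingError_eq_sum_div (hm : 0 < m) (x : Fin m → Ω) :
    samplingError μ x g = (∑ j, (g (x j) - ∫ y, g y ∂μ)) / m := by
  have : (m : ℝ) ≠ 0 := by positivity
  simp only [samplingError, Finset.sum_sub_distrib, Finset.sum_const, Finset.card_univ,
    Fintype.card_fin, nsmul_eq_mul]
  field_simp

variable [IsProbabilityMeasure μ]

theorem abs_samplingError_le {c : ℝ} (hc : ∀ y, |g y| ≤ c) (x : Fin m → Ω) :
    |samplingError μ x g| ≤ 2 * c := by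
  have hmean : |∫ y, g y ∂μ| ≤ c := by
    simpa using norm_integral_le_of_norm_le_const (.of_forall hc : ∀ᵐ y ∂μ, ‖g y‖ ≤ c)
  have hc_nonneg : 0 ≤ c := (abs_nonneg _).trans hmean
  have hsum : |∑ j, g (x j)| ≤ c * m := by
    simpa [mul_comm] using (Finset.abs_sum_le_sum_abs _ _).trans
      (Finset.sum_le_sum fun j (_ : j ∈ Finset.univ) => hc (x j))
  have havg : |(∑ j, g (x j)) / m| ≤ c := by
    rw [abs_div, Nat.abs_cast]
    exact div_le_of_le_mul₀ m.cast_nonneg hc_nonneg hsum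
  exact (abs_sub _ _).trans (by linarith)

theorem mgf_sub_integral_le (hZ : Measurable Z) {v l : ℝ} (hb : ∀ y, |Z y| ≤ v)
    (hv : ∫ y, Z y ^ 2 ∂μ ≤ v) (hl : |l| * v ≤ 1) :
    mgf (fun y => Z y - ∫ z, Z z ∂μ) μ l ≤ Real.exp (l ^ 2 * v) := by
  have hlZ : ∀ y, |l * Z y| ≤ 1 := fun y => by
    rw [abs_mul]
    exact (mul_le_mul_of_nonneg_left (hb y) (abs_nonneg l)).trans hl
  have hZ_int : Integrable Z μ := .of_bound hZ.aestronglyMeasurable v (.of_forall hb)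
  have hZ2_int : Integrable (fun y => Z y ^ 2) μ :=
    .of_bound (hZ.pow_const 2).aestronglyMeasurable (v ^ 2) (.of_forall fun y => by
      rw [norm_pow]
      exact pow_le_pow_left₀ (norm_nonneg _) (hb y) 2)
  have hexp_int : Integrable (fun y => Real.exp (l * Z y)) μ :=
    integrable_exp_mul_of_mem_Icc hZ.aemeasurable (.of_forall fun y => abs_le.1 (hb y))
  have hlin_int : Integrable (fun y => 1 + l * Z y) μ :=
    (integrable_const _).add (hZ_int.const_mul l)
  have hmgf : mgf Z μ l ≤ Real.exp (l * ∫ z, Z z ∂μ + l ^ 2 * v) := by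
    calc mgf Z μ l ≤ ∫ y, (1 + l * Z y + l ^ 2 * Z y ^ 2) ∂μ := by
          refine integral_mono hexp_int (hlin_int.add (hZ2_int.const_mul _)) fun y => ?_
          have := (abs_le.1 (Real.abs_exp_sub_one_sub_id_le (hlZ y))).2
          simp only [mul_pow] at this ⊢
          linarith
      _ = 1 + l * ∫ z, Z z ∂μ + l ^ 2 * ∫ y, Z y ^ 2 ∂μ := by
          rw [integral_add hlin_int (hZ2_int.const_mul _),
            integral_add (integrable_const _) (hZ_int.const_mul l)]
          simp [integral_const_mul]
      _ ≤ l * ∫ z, Z z ∂μ + l ^ 2 * v + 1 := by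
          linarith [mul_le_mul_of_nonneg_left hv (sq_nonneg l)]
      _ ≤ _ := Real.add_one_le_exp _
  simp only [sub_eq_add_neg, mgf_add_const]
  calc mgf Z μ l * Real.exp (l * -∫ z, Z z ∂μ)
      ≤ Real.exp (l * ∫ z, Z z ∂μ + l ^ 2 * v) * Real.exp (l * -∫ z, Z z ∂μ) := by gcongr
    _ = Real.exp (l ^ 2 * v) := by
        rw [← Real.exp_add]
        ring_nf

theorem mgf_sum_eval (hg : Measurable g) (l : ℝ) :
    mgf (fun x => ∑ j, g (x j)) (Measure.pi fun _ : Fin m => μ) l = mgf g μ l ^ m := by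
  have hindep : iIndepFun (fun j (x : Fin m → Ω) => g (x j)) (Measure.pi fun _ => μ) :=
    iIndepFun_pi fun _ => hg.aemeasurable
  have hmarginal : ∀ j, mgf (fun x : Fin m → Ω => g (x j)) (Measure.pi fun _ => μ) l =
      mgf g μ l := fun j => by
    have hmap := mgf_map (X := g) (t := l)
      (measurePreserving_eval (fun _ : Fin m => μ) j).aemeasurable (by fun_prop)
    rw [(measurePreserving_eval (fun _ : Fin m => μ) j).map_eq] at hmap
    exact hmap.symm
  have hprod := hindep.mgf_sum (t := l) (fun j => hg.comp (measurable_pi_apply j)) Finset.univ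
  simpa [hmarginal, Finset.sum_fn] using hprod

theorem measureReal_le_samplingError_le (hZ : Measurable Z) {v u : ℝ} (hv_pos : 0 < v)
    (hu : 0 ≤ u) (hu2 : u ≤ 2) (hb : ∀ y, |Z y| ≤ v) (hv : ∫ y, Z y ^ 2 ∂μ ≤ v) (hm : 0 < m) :
    (Measure.pi fun _ : Fin m => μ).real {x | u ≤ samplingError μ x Z} ≤
      Real.exp (-(m * u ^ 2 / (4 * v))) := by
  have hm_pos : (0 : ℝ) < m := by positivity
  set W : Ω → ℝ := fun y => Z y - ∫ z, Z z ∂μ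
  set l : ℝ := u / (2 * v) with hl
  have hl_nonneg : 0 ≤ l := by positivity
  have hWm : Measurable W := hZ.sub_const _
  have hW_mgf : mgf W μ l ≤ Real.exp (l ^ 2 * v) := by
    refine mgf_sub_integral_le hZ hb hv ?_
    rw [abs_of_nonneg hl_nonneg, hl, div_mul_eq_mul_div, div_le_one (by positivity)]
    nlinarith
  have hsum_eq : ∀ x : Fin m → Ω, ∑ j, W (x j) = m * samplingError μ x Z := fun x => by
    rw [samplingError_eq_sum_div hm, mul_div_cancel₀ _ hm_pos.ne']
  have hint : Integrable (fun x : Fin m → Ω => Real.exp (l * ∑ j, W (x j)))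
      (Measure.pi fun _ => μ) := by
    refine integrable_exp_mul_of_mem_Icc (a := -(m * (2 * v))) (b := m * (2 * v))
      (Finset.measurable_sum _ fun j _ => hWm.comp (measurable_pi_apply j)).aemeasurable
      (.of_forall fun x => abs_le.1 ?_)
    rw [hsum_eq, abs_mul, Nat.abs_cast]
    exact mul_le_mul_of_nonneg_left (abs_samplingError_le hb x) hm_pos.le
  calc (Measure.pi fun _ : Fin m => μ).real {x | u ≤ samplingError μ x Z}
      = (Measure.pi fun _ : Fin m => μ).real {x | m * u ≤ ∑ j, W (x j)} := by
        simp only [hsum_eq, mul_le_mul_iff_right₀ hm_pos]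
    _ ≤ Real.exp (-l * (m * u)) * mgf (fun x => ∑ j, W (x j)) (Measure.pi fun _ => μ) l :=
        measure_ge_le_exp_mul_mgf _ hl_nonneg hint
    _ ≤ Real.exp (-l * (m * u)) * Real.exp (l ^ 2 * v) ^ m := by
        rw [mgf_sum_eval hWm]
        gcongr
        exact mgf_nonneg
    _ = Real.exp (-(m * u ^ 2 / (4 * v))) := by
        rw [← Real.exp_nat_mul, ← Real.exp_add, hl]
        congr 1
        field_simp
        ring

theorem measureReal_lt_abs_samplingError_le (hZ : Measurable Z) {v u : ℝ} (hv_pos : 0 < v)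
    (hu : 0 ≤ u) (hu2 : u ≤ 2) (hb : ∀ y, |Z y| ≤ v) (hv : ∫ y, Z y ^ 2 ∂μ ≤ v) :
    (Measure.pi fun _ : Fin m => μ).real {x | u < |samplingError μ x Z|} ≤
      2 * Real.exp (-(m * u ^ 2 / (4 * v))) := by
  rcases m.eq_zero_or_pos with rfl | hm
  · exact measureReal_le_one.trans (by norm_num)
  have hsub : {x : Fin m → Ω | u < |samplingError μ x Z|} ⊆
      {x | u ≤ samplingError μ x Z} ∪ {x | u ≤ samplingError μ x fun y => -Z y} := by
    intro x hx
    simpa [samplingError_neg] using (lt_abs.1 hx).imp le_of_lt le_of_lt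
  calc _ ≤ _ := measureReal_mono hsub
    _ ≤ _ := measureReal_union_le _ _
    _ ≤ Real.exp (-(m * u ^ 2 / (4 * v))) + Real.exp (-(m * u ^ 2 / (4 * v))) := by
        gcongr
        · exact measureReal_le_samplingError_le hZ hv_pos hu hu2 hb hv hm
        · exact measureReal_le_samplingError_le hZ.neg hv_pos hu hu2 (by simpa using hb)
            (by simpa using hv) hm
    _ = _ := by ring

theorem exists_forall_abs_samplingError_le {ι : Type*} [Fintype ι] {Z : ι → Ω → ℝ}
    (hZ : ∀ i, Measurable (Z i)) {v u : ι → ℝ} (hv_pos : ∀ i, 0 < v i) (hu : ∀ i, 0 ≤ u i)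
    (hu2 : ∀ i, u i ≤ 2) (hb : ∀ i y, |Z i y| ≤ v i) (hv : ∀ i, ∫ y, Z i y ^ 2 ∂μ ≤ v i)
    (hsum : ∑ i, 2 * Real.exp (-(m * u i ^ 2 / (4 * v i))) < 1) :
    ∃ x : Fin m → Ω, ∀ i, |samplingError μ x (Z i)| ≤ u i := by
  by_contra! hbad
  have huniv : ⋃ i, {x : Fin m → Ω | u i < |samplingError μ x (Z i)|} = Set.univ :=
    Set.eq_univ_of_forall fun x => Set.mem_iUnion.2 (hbad x)
  have hle : (1 : ℝ) ≤ ∑ i, 2 * Real.exp (-(m * u i ^ 2 / (4 * v i))) := by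
    calc (1 : ℝ) = (Measure.pi fun _ : Fin m => μ).real
          (⋃ i, {x | u i < |samplingError μ x (Z i)|}) := by rw [huniv, probReal_univ]
      _ ≤ _ := measureReal_iUnion_fintype_le _
      _ ≤ _ := Finset.sum_le_sum fun i _ =>
          measureReal_lt_abs_samplingError_le (hZ i) (hv_pos i) (hu i) (hu2 i) (hb i) (hv i)
  exact absurd hsum hle.not_gt

end Sampling

/-! ### Nets -/

section Nets

theorem exists_finset_cover_of_forall_card_le {E : Type*} [AddGroup E] {S B : Set E}
    (hB_zero : 0 ∈ B) (hB_neg : ∀ u ∈ B, -u ∈ B) {n : ℝ}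
    (hn : ∀ T : Finset E, ↑T ⊆ S → (T : Set E).Pairwise (fun x z => x - z ∉ B) → (T.card : ℝ) ≤ n) :
    ∃ T : Finset E, ↑T ⊆ S ∧ (T.card : ℝ) ≤ n ∧ ∀ x ∈ S, ∃ z ∈ T, x - z ∈ B := by
  classical
  set cards : Set ℕ := {k | ∃ T : Finset E, T.card = k ∧ ↑T ⊆ S ∧
    (T : Set E).Pairwise fun x z => x - z ∉ B}
  have hbdd : BddAbove cards := by
    refine ⟨⌊n⌋₊, ?_⟩
    rintro _ ⟨T, rfl, hTS, hT⟩
    exact Nat.le_floor (hn T hTS hT)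
  obtain ⟨T, hT_card, hTS, hT⟩ : sSup cards ∈ cards := Nat.sSup_mem ⟨0, ∅, by simp⟩ hbdd
  refine ⟨T, hTS, hn T hTS hT, fun x hx => ?_⟩
  by_contra! hxT
  have hx_mem : x ∉ T := fun h => hxT x h (by rwa [sub_self])
  have hT_insert : (insert x T).card ∈ cards := by
    refine ⟨insert x T, rfl, ?_, ?_⟩
    · rw [Finset.coe_insert]
      exact Set.insert_subset hx hTS
    · rw [Finset.coe_insert]
      refine hT.insert fun z hz _ => ⟨hxT z hz, fun h => hxT z hz ?_⟩
      simpa using hB_neg _ h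
  have := le_csSup hbdd hT_insert
  rw [Finset.card_insert_of_notMem hx_mem] at this
  omega

theorem exists_internal_cover {E : Type*} [AddGroup E] {S B B' : Set E}
    (hB : ∀ u ∈ B, ∀ v ∈ B, u - v ∈ B') {T : Finset E} (hT : ∀ x ∈ S, ∃ z ∈ T, x - z ∈ B) :
    ∃ T' : Finset E, ↑T' ⊆ S ∧ T'.card ≤ T.card ∧ ∀ x ∈ S, ∃ z ∈ T', x - z ∈ B' := by
  classical
  let T₀ := T.filter fun z => ∃ x ∈ S, x - z ∈ B
  have hT₀ : ∀ z ∈ T₀, ∃ x ∈ S, x - z ∈ B := fun z hz => (Finset.mem_filter.1 hz).2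
  choose! p hpS hpB using hT₀
  refine ⟨T₀.image p, ?_, Finset.card_image_le.trans (Finset.card_filter_le _ _), fun x hx => ?_⟩
  · simpa [Set.subset_def] using hpS
  · obtain ⟨z, hz, hxz⟩ := hT x hx
    have hz₀ : z ∈ T₀ := Finset.mem_filter.2 ⟨hz, x, hx, hxz⟩
    refine ⟨p z, Finset.mem_image_of_mem p hz₀, ?_⟩
    simpa using hB _ hxz _ (hpB z hz₀)

theorem card_le_of_pairwise_le_norm_sub {E : Type*} [NormedAddCommGroup E] [NormedSpace ℝ E]
    [FiniteDimensional ℝ E] {T : Finset E} {ρ η : ℝ} (hρ : 0 ≤ ρ) (hη : 0 < η)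
    (hT : ∀ x ∈ T, ‖x‖ ≤ ρ) (hsep : (T : Set E).Pairwise fun x z => η ≤ ‖x - z‖) :
    (T.card : ℝ) ≤ (1 + 2 * ρ / η) ^ Module.finrank ℝ E := by
  borelize E
  let ν : Measure E := Measure.addHaar
  have hdisj : (T : Set E).PairwiseDisjoint fun c => Metric.ball c (η / 2) := fun x hx z hz hxz =>
    Metric.ball_disjoint_ball (by simpa [dist_eq_norm] using hsep hx hz hxz)
  have hsub : (⋃ c ∈ T, Metric.ball c (η / 2)) ⊆ Metric.ball 0 (ρ + η / 2) :=
    Set.iUnion₂_subset fun x hx => Metric.ball_subset_ball' (by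
      rw [dist_zero_right]
      linarith [hT x hx])
  have hball : ∀ (x : E) {r : ℝ}, 0 < r →
      ν.real (Metric.ball x r) = r ^ Module.finrank ℝ E * ν.real (Metric.ball 0 1) :=
    fun x r hr => by
      rw [Measure.real, Measure.addHaar_ball_of_pos ν x hr, ENNReal.toReal_mul,
        ENNReal.toReal_ofReal (by positivity), Measure.real]
  have hunit : 0 < ν.real (Metric.ball 0 1) :=
    ENNReal.toReal_pos (Metric.measure_ball_pos ν _ one_pos).ne' measure_ball_lt_top.ne
  have hvol : T.card * ((η / 2) ^ Module.finrank ℝ E * ν.real (Metric.ball 0 1)) ≤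
      (ρ + η / 2) ^ Module.finrank ℝ E * ν.real (Metric.ball 0 1) := by
    calc _ = ν.real (⋃ c ∈ T, Metric.ball c (η / 2)) := by
          rw [measureReal_biUnion_finset hdisj (fun _ _ => measurableSet_ball)
            (fun _ _ => measure_ball_lt_top.ne), Finset.sum_congr rfl fun c _ =>
            hball c (by positivity : 0 < η / 2), Finset.sum_const, nsmul_eq_mul]
      _ ≤ ν.real (Metric.ball 0 (ρ + η / 2)) := measureReal_mono hsub measure_ball_lt_top.ne
      _ = _ := hball 0 (by positivity)
  rw [← mul_assoc] at hvol
  calc (T.card : ℝ) ≤ (ρ + η / 2) ^ Module.finrank ℝ E / (η / 2) ^ Module.finrank ℝ E := by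
        rw [le_div_iff₀ (by positivity)]
        exact le_of_mul_le_mul_right hvol hunit
    _ = (1 + 2 * ρ / η) ^ Module.finrank ℝ E := by
        rw [← div_pow]
        congr 1
        field_simp
        ring

end Nets

/-! ### Gaussian weights and the dual Sudakov inequality -/

section Gaussian

open scoped RealInnerProductSpace

variable {E : Type*} [NormedAddCommGroup E]

/-- The unnormalized density of the standard Gaussian measure on a Euclidean space. -/
noncomputable def gaussianWeight (x : E) : ℝ := Real.exp (-(‖x‖ ^ 2 / 2))

theorem gaussianWeight_pos (x : E) : 0 < gaussianWeight x := Real.exp_pos _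

theorem gaussianWeight_neg (x : E) : gaussianWeight (-x) = gaussianWeight x := by
  simp [gaussianWeight]

variable [InnerProductSpace ℝ E] {Y : Type*} {K : Y → E}

theorem gaussianWeight_add (x z : E) :
    gaussianWeight (x + z) = gaussianWeight z * (gaussianWeight x * Real.exp (-⟪x, z⟫)) := by
  simp only [gaussianWeight, norm_add_sq_real, ← Real.exp_add]
  ring_nf

theorem gaussianWeight_mul_exp_inner (a x : E) :
    gaussianWeight x * Real.exp ⟪a, x⟫ = Real.exp (‖a‖ ^ 2 / 2) * gaussianWeight (x - a) := by
  simp only [gaussianWeight, ← Real.exp_add, norm_sub_sq_real, real_inner_comm]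
  ring_nf

/-- The intersection of the slabs of half-width `η` in the directions `K y`: the ball of radius
`η` for the seminorm `sup_y |⟪K y, x⟫|`. -/
def slab (K : Y → E) (η : ℝ) : Set E := {x | ∀ y, |⟪K y, x⟫| ≤ η}

theorem zero_mem_slab {η : ℝ} (hη : 0 ≤ η) : 0 ∈ slab K η := fun y => by simpa using hη

theorem neg_mem_slab {η : ℝ} {x : E} (hx : x ∈ slab K η) : -x ∈ slab K η := fun y => by
  simpa using hx y

theorem sub_mem_slab {η η' : ℝ} {x z : E} (hx : x ∈ slab K η) (hz : z ∈ slab K η') :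
    x - z ∈ slab K (η + η') := fun y => by
  rw [inner_sub_right]
  exact (abs_sub _ _).trans (add_le_add (hx y) (hz y))

theorem smul_mem_slab {η c : ℝ} (hc : 0 ≤ c) {x : E} (hx : x ∈ slab K η) :
    c • x ∈ slab K (c * η) := fun y => by
  rw [real_inner_smul_right, abs_mul, abs_of_nonneg hc]
  exact mul_le_mul_of_nonneg_left (hx y) hc

theorem pairwiseDisjoint_preimage_slab {T : Finset E} {s l η : ℝ} (hl : 0 < l)
    (hs : s + s ≤ l * η) (hsep : (T : Set E).Pairwise fun x z => x - z ∉ slab K η) :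
    (T : Set E).PairwiseDisjoint fun z => (fun x => x - l • z) ⁻¹' slab K s := by
  intro z hz w hw hzw
  refine Set.disjoint_left.2 fun x hxz hxw => hsep hz hw hzw ?_
  have hdiff : l • (z - w) ∈ slab K (l * η) := fun y => by
    have := (sub_mem_slab hxw hxz y).trans hs
    rwa [sub_sub_sub_cancel_left, ← smul_sub] at this
  have hscaled := smul_mem_slab (inv_nonneg.2 hl.le) hdiff
  rwa [inv_smul_smul₀ hl.ne', inv_mul_cancel_left₀ hl.ne'] at hscaled

variable [MeasurableSpace E] [BorelSpace E]

theorem measurableSet_slab (η : ℝ) : MeasurableSet (slab K η) := by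
  have : slab K η = ⋂ y, {x | |⟪K y, x⟫| ≤ η} := by
    ext
    simp [slab]
  rw [this]
  exact (isClosed_iInter fun y => isClosed_le (by fun_prop) continuous_const).measurableSet

variable [FiniteDimensional ℝ E]

theorem integral_gaussianWeight_pos : 0 < ∫ x : E, gaussianWeight x := by
  have hcongr : (gaussianWeight : E → ℝ) = fun x => Real.exp (-(1 / 2) * ‖x‖ ^ 2) := by
    ext x
    rw [gaussianWeight]
    ring_nf
  rw [hcongr, GaussianFourier.integral_rexp_neg_mul_sq_norm (by norm_num)]
  positivity

theorem integrable_gaussianWeight : Integrable (gaussianWeight : E → ℝ) :=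
  .of_integral_ne_zero integral_gaussianWeight_pos.ne'

theorem integrable_gaussianWeight_mul_exp_inner (a : E) :
    Integrable fun x => gaussianWeight x * Real.exp ⟪a, x⟫ := by
  simp only [gaussianWeight_mul_exp_inner]
  exact (integrable_gaussianWeight.comp_sub_right a).const_mul _

theorem integral_gaussianWeight_mul_exp_inner (a : E) :
    ∫ x, gaussianWeight x * Real.exp ⟪a, x⟫ =
      Real.exp (‖a‖ ^ 2 / 2) * ∫ x : E, gaussianWeight x := by
  simp only [gaussianWeight_mul_exp_inner]
  rw [integral_const_mul, integral_sub_right_eq_self gaussianWeight a]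

theorem setIntegral_gaussianWeight_lt_abs_inner_le {a : E} {H s : ℝ} (hH : 0 < H) (ha : ‖a‖ ≤ H)
    (hs : 0 ≤ s) : ∫ x in {x | s < |⟪a, x⟫|}, gaussianWeight x ≤
      2 * Real.exp (-(s ^ 2 / (2 * H ^ 2))) * ∫ x : E, gaussianWeight x := by
  set t := s / H ^ 2 with ht
  have ht_nonneg : 0 ≤ t := by positivity
  set I := ∫ x : E, gaussianWeight x
  have hI : 0 ≤ I := integral_gaussianWeight_pos.le
  set F : E → ℝ := fun x => Real.exp (-(t * s)) *
    (gaussianWeight x * Real.exp ⟪t • a, x⟫ + gaussianWeight x * Real.exp ⟪-(t • a), x⟫)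
  have hF_int : Integrable F := ((integrable_gaussianWeight_mul_exp_inner _).add
    (integrable_gaussianWeight_mul_exp_inner _)).const_mul _
  have hmeas : MeasurableSet {x | s < |⟪a, x⟫|} :=
    (isOpen_lt continuous_const (by fun_prop)).measurableSet
  have hmarkov : ∀ x, s < |⟪a, x⟫| → gaussianWeight x ≤ F x := fun x hx => by
    have hsplit : F x = gaussianWeight x *
        (Real.exp (t * (⟪a, x⟫ - s)) + Real.exp (t * (-⟪a, x⟫ - s))) := by
      simp only [F, inner_neg_left, real_inner_smul_left, sub_eq_add_neg, mul_add,
        Real.exp_add, mul_neg]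
      ring
    rw [hsplit]
    refine le_mul_of_one_le_right (gaussianWeight_pos x).le ?_
    rcases lt_abs.1 hx with h | h
    · linarith [Real.one_le_exp (mul_nonneg ht_nonneg (sub_nonneg.2 h.le)),
        Real.exp_pos (t * (-⟪a, x⟫ - s))]
    · linarith [Real.one_le_exp (mul_nonneg ht_nonneg (sub_nonneg.2 h.le)),
        Real.exp_pos (t * (⟪a, x⟫ - s))]
  calc ∫ x in {x | s < |⟪a, x⟫|}, gaussianWeight x
      ≤ ∫ x in {x | s < |⟪a, x⟫|}, F x := setIntegral_mono_on
        integrable_gaussianWeight.integrableOn hF_int.integrableOn hmeas hmarkov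
    _ ≤ ∫ x, F x := setIntegral_le_integral hF_int (.of_forall fun x => by
        have := gaussianWeight_pos x
        positivity)
    _ = 2 * Real.exp (-(t * s) + (t * ‖a‖) ^ 2 / 2) * I := by
        rw [integral_const_mul, integral_add (integrable_gaussianWeight_mul_exp_inner _)
          (integrable_gaussianWeight_mul_exp_inner _), integral_gaussianWeight_mul_exp_inner,
          integral_gaussianWeight_mul_exp_inner, norm_neg, norm_smul,
          Real.norm_of_nonneg ht_nonneg, Real.exp_add]
        ring
    _ ≤ 2 * Real.exp (-(t * s) + (t * H) ^ 2 / 2) * I := by gcongr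
    _ = 2 * Real.exp (-(s ^ 2 / (2 * H ^ 2))) * I := by
        congr 3
        rw [ht]
        field_simp
        ring

theorem setIntegral_iUnion_le {α ι : Type*} [MeasurableSpace α] [Fintype ι] {ν : Measure α}
    {f : α → ℝ} (hf : ∀ x, 0 ≤ f x) (hf_int : Integrable f ν) (s : ι → Set α) :
    ∫ x in ⋃ i, s i, f x ∂ν ≤ ∑ i, ∫ x in s i, f x ∂ν := by
  have hsum := integral_finsetSum_measure (s := Finset.univ) (μ := fun i => ν.restrict (s i))
    fun i _ => hf_int.integrableOn (s := s i)
  rw [← hsum]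
  refine integral_mono_measure ?_ (.of_forall hf)
    (integrable_finsetSum_measure.2 fun i _ => hf_int.integrableOn)
  rw [← Measure.sum_fintype]
  exact Measure.restrict_iUnion_le

theorem half_integral_gaussianWeight_le_slab [Fintype Y] [Nonempty Y] {H s : ℝ} (hH : 0 < H)
    (hK : ∀ y, ‖K y‖ ≤ H) (hs : 0 ≤ s)
    (hs_sq : s ^ 2 = 2 * H ^ 2 * Real.log (4 * Fintype.card Y)) :
    (∫ x : E, gaussianWeight x) / 2 ≤ ∫ x in slab K s, gaussianWeight x := by
  set I := ∫ x : E, gaussianWeight x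
  have : (0 : ℝ) < Fintype.card Y := by exact_mod_cast Fintype.card_pos
  have hcompl : (slab K s)ᶜ = ⋃ y, {x | s < |⟪K y, x⟫|} := by
    ext
    simp [slab]
  have htail : ∀ y, ∫ x in {x | s < |⟪K y, x⟫|}, gaussianWeight x ≤
      I / (2 * Fintype.card Y) := fun y => by
    refine (setIntegral_gaussianWeight_lt_abs_inner_le hH (hK y) hs).trans_eq ?_
    rw [hs_sq, mul_div_cancel_left₀ _ (by positivity), Real.exp_neg,
      Real.exp_log (by positivity)]
    field_simp
    ring
  have hbad : ∫ x in (slab K s)ᶜ, gaussianWeight x ≤ I / 2 := by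
    calc _ ≤ ∑ y, ∫ x in {x | s < |⟪K y, x⟫|}, gaussianWeight x := by
          rw [hcompl]
          exact setIntegral_iUnion_le (fun x => (gaussianWeight_pos x).le)
            integrable_gaussianWeight _
      _ ≤ ∑ _y : Y, I / (2 * Fintype.card Y) := Finset.sum_le_sum fun y _ => htail y
      _ = I / 2 := by
          rw [Finset.sum_const, nsmul_eq_mul, Finset.card_univ]
          field_simp
  linarith [integral_add_compl (measurableSet_slab (K := K) s) integrable_gaussianWeight]

theorem gaussianWeight_mul_setIntegral_le {S : Set E} (hS_neg : ∀ x ∈ S, -x ∈ S) (z : E) :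
    gaussianWeight z * ∫ x in S, gaussianWeight x ≤
      ∫ x in (fun x => x - z) ⁻¹' S, gaussianWeight x := by
  have hshift : ∫ x in (fun x => x - z) ⁻¹' S, gaussianWeight x =
      ∫ x in S, gaussianWeight (x + z) := by
    simpa using (measurePreserving_sub_right volume z).setIntegral_preimage_emb
      (measurableEmbedding_subRight z) (fun x => gaussianWeight (x + z)) S
  have hreflect : ∫ x in S, gaussianWeight (x - z) = ∫ x in S, gaussianWeight (x + z) := by
    have hS_eq : Neg.neg ⁻¹' S = S :=
      Set.ext fun x => ⟨fun h => by simpa using hS_neg _ h, hS_neg x⟩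
    have := (Measure.measurePreserving_neg (volume : Measure E)).setIntegral_preimage_emb
      (MeasurableEquiv.neg E).measurableEmbedding (fun x => gaussianWeight (x + z)) S
    rw [hS_eq] at this
    rw [← this]
    refine integral_congr_ae (.of_forall fun x => ?_)
    simp only
    rw [← gaussianWeight_neg, neg_sub, neg_add_eq_sub]
  have hplus : IntegrableOn (fun x => gaussianWeight (x + z)) S :=
    (integrable_gaussianWeight.comp_add_right z).integrableOn
  have hminus : IntegrableOn (fun x => gaussianWeight (x - z)) S :=
    (integrable_gaussianWeight.comp_sub_right z).integrableOn
  have hpoint : ∀ x : E, 2 * (gaussianWeight z * gaussianWeight x) ≤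
      gaussianWeight (x + z) + gaussianWeight (x - z) := fun x => by
    rw [sub_eq_add_neg, gaussianWeight_add, gaussianWeight_add, gaussianWeight_neg, inner_neg_right,
      neg_neg]
    have hcosh : 2 ≤ Real.exp (-⟪x, z⟫) + Real.exp ⟪x, z⟫ := by
      linarith [Real.add_one_le_exp ⟪x, z⟫, Real.add_one_le_exp (-⟪x, z⟫)]
    linarith [mul_le_mul_of_nonneg_left hcosh
      (mul_pos (gaussianWeight_pos z) (gaussianWeight_pos x)).le]
  have := setIntegral_mono (μ := volume) (s := S)
    ((integrable_gaussianWeight.integrableOn.const_mul _).const_mul _) (hplus.add hminus) hpoint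
  simp only [Pi.add_apply] at this
  rw [integral_const_mul, integral_const_mul, integral_add hplus hminus, hreflect] at this
  rw [hshift]
  linarith

-- Disjoint translates of a slab carrying half of the Gaussian mass keep a fixed share of that mass.
theorem card_le_of_pairwise_sub_notMem_slab {E : Type*} [NormedAddCommGroup E]
    [InnerProductSpace ℝ E] [FiniteDimensional ℝ E] [Fintype Y] [Nonempty Y] {K : Y → E} {H : ℝ}
    (hH : 0 < H) (hK : ∀ y, ‖K y‖ ≤ H) {T : Finset E} {ρ η : ℝ} (hη : 0 < η)
    (hT : ∀ x ∈ T, ‖x‖ ≤ ρ) (hsep : (T : Set E).Pairwise fun x z => x - z ∉ slab K η) :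
    (T.card : ℝ) ≤ 2 * Real.exp (4 * H ^ 2 * Real.log (4 * Fintype.card Y) * ρ ^ 2 / η ^ 2) := by
  borelize E
  have hlog : 0 < Real.log (4 * Fintype.card Y) := by
    have : (1 : ℝ) ≤ Fintype.card Y := by exact_mod_cast Fintype.card_pos
    exact Real.log_pos (by linarith)
  obtain ⟨s, hs_pos, hs_sq⟩ : ∃ s : ℝ, 0 < s ∧
      s ^ 2 = 2 * H ^ 2 * Real.log (4 * Fintype.card Y) :=
    ⟨√(2 * H ^ 2 * Real.log (4 * Fintype.card Y)), by positivity, Real.sq_sqrt (by positivity)⟩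
  set l := 2 * s / η with hl
  have hl_pos : 0 < l := by positivity
  set I := ∫ x : E, gaussianWeight x
  have hI : 0 < I := integral_gaussianWeight_pos
  have hexponent : 4 * H ^ 2 * Real.log (4 * Fintype.card Y) * ρ ^ 2 / η ^ 2 =
      (l * ρ) ^ 2 / 2 := by
    rw [hl, mul_pow, div_pow, mul_pow, hs_sq]
    field_simp
    ring
  have hmass : ∀ z ∈ T, Real.exp (-((l * ρ) ^ 2 / 2)) * (I / 2) ≤
      ∫ x in (fun x => x - l • z) ⁻¹' slab K s, gaussianWeight x := fun z hz => by
    refine le_trans ?_ (gaussianWeight_mul_setIntegral_le (fun _ => neg_mem_slab) (l • z))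
    refine mul_le_mul ?_ (half_integral_gaussianWeight_le_slab hH hK hs_pos.le hs_sq)
      (by positivity) (gaussianWeight_pos _).le
    rw [gaussianWeight, norm_smul, Real.norm_of_nonneg hl_pos.le]
    gcongr
    exact hT z hz
  have htotal : T.card * (Real.exp (-((l * ρ) ^ 2 / 2)) * (I / 2)) ≤ I := by
    calc _ ≤ ∑ z ∈ T, ∫ x in (fun x => x - l • z) ⁻¹' slab K s, gaussianWeight x := by
          rw [← nsmul_eq_mul]
          exact Finset.card_nsmul_le_sum _ _ _ hmass
      _ = ∫ x in ⋃ z ∈ T, (fun x => x - l • z) ⁻¹' slab K s, gaussianWeight x :=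
          (integral_biUnion_finset T
            (fun z _ => (measurable_sub_const _) (measurableSet_slab s))
            (pairwiseDisjoint_preimage_slab hl_pos
              (by rw [hl, div_mul_cancel₀ _ hη.ne', two_mul]) hsep)
            fun z _ => integrable_gaussianWeight.integrableOn).symm
      _ ≤ I := setIntegral_le_integral integrable_gaussianWeight
          (.of_forall fun x => (gaussianWeight_pos x).le)
  have hcard : T.card * Real.exp (-((l * ρ) ^ 2 / 2)) ≤ 2 := by
    refine le_of_mul_le_mul_right ?_ (half_pos hI)
    linarith
  rwa [Real.exp_neg, ← div_eq_mul_inv, div_le_iff₀ (Real.exp_pos _), ← hexponent] at hcard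

end Gaussian

/-! ### Continuous Parseval frames -/

section Frames

open scoped RealInnerProductSpace

variable {Ω E : Type*} [MeasurableSpace Ω] [NormedAddCommGroup E] [InnerProductSpace ℝ E]
  {μ : Measure Ω} {K : Ω → E} {H A : ℝ}

/-- A continuous Parseval frame of the Hilbert space `E`, bounded by `H`. A finite-dimensional
space of bounded functions with its `L²` inner product is encoded by its point evaluations `K x`,
the function represented by `e` being `x ↦ ⟪K x, e⟫`. -/
structure IsParsevalFrame (μ : Measure Ω) (K : Ω → E) (H : ℝ) : Prop where
  norm_le : ∀ x, ‖K x‖ ≤ H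
  measurable_inner : ∀ e, Measurable fun x => ⟪K x, e⟫
  integral_inner_mul_inner : ∀ e f, ∫ x, ⟪K x, e⟫ * ⟪K x, f⟫ ∂μ = ⟪e, f⟫

namespace IsParsevalFrame

theorem abs_inner_le (hK : IsParsevalFrame μ K H) (x : Ω) (e : E) : |⟪K x, e⟫| ≤ H * ‖e‖ :=
  (abs_real_inner_le_norm _ _).trans (by gcongr; exact hK.norm_le x)

theorem integral_inner_sq (hK : IsParsevalFrame μ K H) (e : E) :
    ∫ x, ⟪K x, e⟫ ^ 2 ∂μ = ‖e‖ ^ 2 := by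
  simpa only [sq, real_inner_self_eq_norm_mul_norm] using hK.integral_inner_mul_inner e e

variable [IsProbabilityMeasure μ]

theorem nonneg (hK : IsParsevalFrame μ K H) : 0 ≤ H := by
  obtain ⟨x⟩ := nonempty_of_isProbabilityMeasure μ
  exact (norm_nonneg _).trans (hK.norm_le x)

theorem integrable_inner (hK : IsParsevalFrame μ K H) (e : E) :
    Integrable (fun x => ⟪K x, e⟫) μ :=
  .of_bound (hK.measurable_inner e).aestronglyMeasurable _ (.of_forall fun x => hK.abs_inner_le x e)

theorem inner_le_mul_of_forall_abs_inner_le (hK : IsParsevalFrame μ K H) {e f : E} {c : ℝ}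
    (he : ∀ x, |⟪K x, e⟫| ≤ c) (hf : ∫ x, |⟪K x, f⟫| ∂μ ≤ A) : ⟪e, f⟫ ≤ c * A := by
  obtain ⟨x₀⟩ := nonempty_of_isProbabilityMeasure μ
  have hc : 0 ≤ c := (abs_nonneg _).trans (he x₀)
  have hf_int := (hK.integrable_inner f).abs
  calc ⟪e, f⟫ = ∫ x, ⟪K x, e⟫ * ⟪K x, f⟫ ∂μ := (hK.integral_inner_mul_inner e f).symm
    _ ≤ ∫ x, c * |⟪K x, f⟫| ∂μ := by
        refine (le_abs_self _).trans (abs_integral_le_integral_abs.trans ?_)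
        refine integral_mono_of_nonneg (.of_forall fun x => abs_nonneg _) (hf_int.const_mul c)
          (.of_forall fun x => ?_)
        simp only [abs_mul]
        gcongr
        exact he x
    _ ≤ c * A := by
        rw [integral_const_mul]
        gcongr

theorem norm_le_of_integral_abs_le (hK : IsParsevalFrame μ K H) {f : E}
    (hf : ∫ x, |⟪K x, f⟫| ∂μ ≤ A) : ‖f‖ ≤ H * A := by
  have hA : 0 ≤ A := (integral_nonneg fun x => abs_nonneg _).trans hf
  have hself := hK.inner_le_mul_of_forall_abs_inner_le (fun x => hK.abs_inner_le x f) hf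
  rw [real_inner_self_eq_norm_mul_norm] at hself
  rcases (norm_nonneg f).eq_or_lt with hzero | hpos
  · rw [← hzero]
    exact mul_nonneg hK.nonneg hA
  · exact le_of_mul_le_mul_right (hself.trans_eq (by ring)) hpos

theorem abs_inner_le_of_integral_abs_le (hK : IsParsevalFrame μ K H) {f : E}
    (hf : ∫ x, |⟪K x, f⟫| ∂μ ≤ A) (x : Ω) : |⟪K x, f⟫| ≤ A * H ^ 2 := by
  have hH := hK.nonneg
  calc |⟪K x, f⟫| ≤ H * ‖f‖ := hK.abs_inner_le x f
    _ ≤ H * (H * A) := by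
        gcongr
        exact hK.norm_le_of_integral_abs_le hf
    _ = A * H ^ 2 := by ring

theorem finrank_le [FiniteDimensional ℝ E] (hK : IsParsevalFrame μ K H) :
    (Module.finrank ℝ E : ℝ) ≤ H ^ 2 := by
  let b := stdOrthonormalBasis ℝ E
  have hb_int : ∀ i, Integrable (fun x => ⟪K x, b i⟫ ^ 2) μ := fun i =>
    .of_bound ((hK.measurable_inner (b i)).pow_const 2).aestronglyMeasurable (H ^ 2)
      (.of_forall fun x => by
        rw [norm_pow]
        exact pow_le_pow_left₀ (norm_nonneg _) (by simpa using hK.abs_inner_le x (b i)) 2)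
  calc (Module.finrank ℝ E : ℝ) = ∑ i, ∫ x, ⟪K x, b i⟫ ^ 2 ∂μ := by
        simp [hK.integral_inner_sq]
    _ = ∫ x, ∑ i, ⟪K x, b i⟫ ^ 2 ∂μ := (integral_finsetSum _ fun i _ => hb_int i).symm
    _ = ∫ x, ‖K x‖ ^ 2 ∂μ := by
        simp only [b.sum_sq_inner_left]
    _ ≤ ∫ _, H ^ 2 ∂μ := integral_mono_of_nonneg (.of_forall fun x => sq_nonneg _)
        (integrable_const _) (.of_forall fun x =>
          pow_le_pow_left₀ (norm_nonneg _) (hK.norm_le x) 2)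
    _ = H ^ 2 := by simp

end IsParsevalFrame

variable {V F : Type*} [AddCommGroup V] [Module ℝ V]

theorem exists_isParsevalFrame_of_surjective [NormedAddCommGroup F] [InnerProductSpace ℝ F]
    [FiniteDimensional ℝ F] (hH : 0 ≤ H) {T : V →ₗ[ℝ] Ω → ℝ} (hT_meas : ∀ v, Measurable (T v))
    {r : V →ₗ[ℝ] F} (hr : Function.Surjective r)
    (hr_inner : ∀ v w, ∫ x, T v x * T w x ∂μ = ⟪r v, r w⟫) (hT : ∀ v x, |T v x| ≤ H * ‖r v‖) :
    ∃ K : Ω → F, IsParsevalFrame μ K H ∧ ∀ x v, ⟪K x, r v⟫ = T v x := by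
  obtain ⟨s, hs⟩ := r.exists_rightInverse_of_surjective (LinearMap.range_eq_top.2 hr)
  have hrs : ∀ e, r (s e) = e := fun e => LinearMap.congr_fun hs e
  let ev : Ω → StrongDual ℝ F := fun x =>
    (LinearMap.proj x ∘ₗ T ∘ₗ s).mkContinuous H fun e => by simpa [hrs] using hT (s e) x
  let K : Ω → F := fun x => (InnerProductSpace.toDual ℝ F).symm (ev x)
  have hK : ∀ x e, ⟪K x, e⟫ = T (s e) x := fun x e => InnerProductSpace.toDual_symm_apply
  refine ⟨K, ⟨fun x => ?_, fun e => ?_, fun e f => ?_⟩, fun x v => ?_⟩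
  · rw [LinearIsometryEquiv.norm_map]
    exact LinearMap.mkContinuous_norm_le _ hH _
  · simpa only [hK] using hT_meas (s e)
  · simp only [hK, hr_inner, hrs]
  · have hker : r (s (r v) - v) = 0 := by rw [map_sub, hrs, sub_self]
    have hsub := hT (s (r v) - v) x
    rw [hker, norm_zero, mul_zero, map_sub, abs_nonpos_iff] at hsub
    rw [hK]
    exact sub_eq_zero.1 hsub

variable [IsProbabilityMeasure μ]

theorem exists_isParsevalFrame [FiniteDimensional ℝ V] (hH : 0 ≤ H) (T : V →ₗ[ℝ] Ω → ℝ)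
    (hT_meas : ∀ v, Measurable (T v)) (hT : ∀ v x, |T v x| ≤ H * √(∫ y, T v y ^ 2 ∂μ)) :
    ∃ (E : Submodule ℝ (Lp ℝ 2 μ)) (K : Ω → E) (r : V →ₗ[ℝ] E), FiniteDimensional ℝ E ∧
      IsParsevalFrame μ K H ∧ (∀ x v, ⟪K x, r v⟫ = T v x) ∧
      Module.finrank ℝ E ≤ Module.finrank ℝ V := by
  have hT_memLp : ∀ v, MemLp (T v) 2 μ := fun v =>
    .of_bound (hT_meas v).aestronglyMeasurable _ (.of_forall (hT v))
  let R : V →ₗ[ℝ] Lp ℝ 2 μ :=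
    { toFun := fun v => (hT_memLp v).toLp (T v)
      map_add' := fun v w => by
        rw [← MemLp.toLp_add]
        congr 1
        exact T.map_add v w
      map_smul' := fun c v => by
        rw [RingHom.id_apply, ← MemLp.toLp_const_smul]
        congr 1
        exact T.map_smul c v }
  have hr_inner : ∀ v w, ∫ x, T v x * T w x ∂μ = ⟪R.rangeRestrict v, R.rangeRestrict w⟫ :=
    fun v w => by
      change _ = ⟪(hT_memLp v).toLp (T v), (hT_memLp w).toLp (T w)⟫
      rw [L2.inner_def]
      refine integral_congr_ae ?_
      filter_upwards [(hT_memLp v).coeFn_toLp, (hT_memLp w).coeFn_toLp] with x hv hw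
      simp [hv, hw, mul_comm]
  obtain ⟨K, hK, hKT⟩ := exists_isParsevalFrame_of_surjective hH hT_meas
    R.surjective_rangeRestrict hr_inner fun v x => by
      rw [norm_eq_sqrt_real_inner, ← hr_inner]
      simpa only [sq] using hT v x
  exact ⟨R.range, K, R.rangeRestrict, inferInstance, hK, hKT, R.finrank_range_le⟩

end Frames

/-! ### Nets of a frame in the uniform norm -/

section FrameNets

open scoped RealInnerProductSpace

variable {Y E : Type*} [MeasurableSpace Y] {μ : Measure Y}
  [NormedAddCommGroup E] [InnerProductSpace ℝ E] {K : Y → E} {H A : ℝ}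

/-- The vectors `± A • K y`, the atoms of Maurey's empirical method. -/
noncomputable def signedAtom (K : Y → E) (A : ℝ) (p : Y × Bool) : E :=
  (if p.2 then A else -A) • K p.1

variable [IsProbabilityMeasure μ] {f : E} {S : Set E}

namespace IsParsevalFrame

theorem norm_sub_signedAtom_le (hK : IsParsevalFrame μ K H) (hf : ∫ y, |⟪K y, f⟫| ∂μ ≤ A)
    (p : Y × Bool) : ‖f - signedAtom K A p‖ ≤ 2 * H * A := by
  have hA : 0 ≤ A := (integral_nonneg fun y => abs_nonneg _).trans hf
  have hsign : ‖if p.2 then A else -A‖ = A := by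
    split_ifs <;> simp [abs_of_nonneg hA]
  have hatom : ‖signedAtom K A p‖ ≤ A * H := by
    rw [signedAtom, norm_smul, hsign]
    gcongr
    exact hK.norm_le p.1
  linarith [norm_sub_le f (signedAtom K A p), hK.norm_le_of_integral_abs_le hf]

section Maurey

variable [Finite Y]

theorem exists_inner_sub_signedAtom_nonpos (hK : IsParsevalFrame μ K H)
    (hf : ∫ y, |⟪K y, f⟫| ∂μ ≤ A) (e : E) :
    ∃ p, ⟪e, f - signedAtom K A p⟫ ≤ 0 := by
  have := nonempty_of_isProbabilityMeasure μ
  obtain ⟨y, hy⟩ := Finite.exists_max fun y => |⟪K y, e⟫|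
  refine ⟨(y, decide (0 ≤ ⟪K y, e⟫)), ?_⟩
  have hmax := hK.inner_le_mul_of_forall_abs_inner_le hy hf
  rw [inner_sub_right, signedAtom, real_inner_smul_right, real_inner_comm (K y)]
  rcases le_or_gt 0 ⟪K y, e⟫ with h | h
  · rw [abs_of_nonneg h] at hmax
    simp only [h, decide_true, if_true]
    linarith
  · rw [abs_of_neg h] at hmax
    simp only [h.not_ge, decide_false, Bool.false_eq_true, if_false]
    linarith

theorem exists_norm_smul_sub_sum_signedAtom_sq_le (hK : IsParsevalFrame μ K H)
    (hf : ∫ y, |⟪K y, f⟫| ∂μ ≤ A) (n : ℕ) :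
    ∃ s : Fin n → Y × Bool,
      ‖(n : ℝ) • f - ∑ i, signedAtom K A (s i)‖ ^ 2 ≤ n * (2 * H * A) ^ 2 := by
  induction n with
  | zero => exact ⟨Fin.elim0, by simp⟩
  | succ n ih =>
    obtain ⟨s, hs⟩ := ih
    set e := (n : ℝ) • f - ∑ i, signedAtom K A (s i) with he
    obtain ⟨p, hp⟩ := hK.exists_inner_sub_signedAtom_nonpos hf e
    refine ⟨Fin.snoc s p, ?_⟩
    have hstep : ((n + 1 : ℕ) : ℝ) • f - ∑ i, signedAtom K A (Fin.snoc (α := fun _ => _) s p i) =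
        e + (f - signedAtom K A p) := by
      simp only [Fin.sum_univ_castSucc, Fin.snoc_castSucc, Fin.snoc_last, he, Nat.cast_add,
        Nat.cast_one, add_smul, one_smul]
      abel
    have hincr := pow_le_pow_left₀ (norm_nonneg _) (hK.norm_sub_signedAtom_le hf p) 2
    rw [hstep, norm_add_sq_real]
    push_cast
    linarith

theorem exists_norm_sub_average_signedAtom_le (hK : IsParsevalFrame μ K H)
    (hf : ∫ y, |⟪K y, f⟫| ∂μ ≤ A) {n : ℕ} (hn : 0 < n) :
    ∃ s : Fin n → Y × Bool,
      ‖f - (n : ℝ)⁻¹ • ∑ i, signedAtom K A (s i)‖ ≤ √((2 * H * A) ^ 2 / n) := by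
  obtain ⟨s, hs⟩ := hK.exists_norm_smul_sub_sum_signedAtom_sq_le hf n
  have hn_pos : (0 : ℝ) < n := by exact_mod_cast hn
  refine ⟨s, Real.le_sqrt_of_sq_le ?_⟩
  have hscale : f - (n : ℝ)⁻¹ • ∑ i, signedAtom K A (s i) =
      (n : ℝ)⁻¹ • ((n : ℝ) • f - ∑ i, signedAtom K A (s i)) := by
    rw [smul_sub, inv_smul_smul₀ hn_pos.ne']
  rw [hscale, norm_smul, mul_pow, Real.norm_of_nonneg (by positivity)]
  calc (n : ℝ)⁻¹ ^ 2 * ‖(n : ℝ) • f - ∑ i, signedAtom K A (s i)‖ ^ 2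
      ≤ (n : ℝ)⁻¹ ^ 2 * (n * (2 * H * A) ^ 2) := by gcongr
    _ = (2 * H * A) ^ 2 / n := by field_simp

end Maurey

end IsParsevalFrame

theorem two_mul_pow_mul_exp_le {c : ℝ} (hc : 1 ≤ c) {n : ℕ} (hn : 0 < n) :
    (2 * c) ^ n * (2 * Real.exp (64 * n * Real.log (4 * c))) ≤
      Real.exp (66 * n * Real.log (4 * c)) := by
  have hn_one : (1 : ℝ) ≤ n := by exact_mod_cast hn
  have hlog : 1 ≤ Real.log (4 * c) := by
    rw [Real.le_log_iff_exp_le (by positivity)]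
    linarith [Real.exp_one_lt_d9]
  calc (2 * c) ^ n * (2 * Real.exp (64 * n * Real.log (4 * c)))
      ≤ (4 * c) ^ n * (Real.exp 1 * Real.exp (64 * n * Real.log (4 * c))) := by
        gcongr
        · norm_num
        · linarith [Real.exp_one_gt_d9]
    _ = Real.exp (n * Real.log (4 * c) + (1 + 64 * n * Real.log (4 * c))) := by
        rw [Real.exp_add, Real.exp_add, Real.exp_nat_mul, Real.exp_log (by positivity)]
    _ ≤ _ := Real.exp_le_exp.2 (by nlinarith)

variable [FiniteDimensional ℝ E]

namespace IsParsevalFrame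

theorem exists_fine_net (hK : IsParsevalFrame μ K H) (hH : 0 < H) (hA : 0 < A)
    (hS : ∀ f ∈ S, ∫ y, |⟪K y, f⟫| ∂μ ≤ A) (k : ℕ) :
    ∃ T : Finset E, ↑T ⊆ S ∧ (T.card : ℝ) ≤ Real.exp (Module.finrank ℝ E * (k + 2)) ∧
      ∀ f ∈ S, ∃ g ∈ T, f - g ∈ slab K (A * H ^ 2 / 2 ^ k) := by
  refine exists_finset_cover_of_forall_card_le (zero_mem_slab (by positivity))
    (fun _ => neg_mem_slab) fun T hTS hT => ?_
  have hsep : (T : Set E).Pairwise fun x z => H * A / 2 ^ k ≤ ‖x - z‖ := by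
    refine hT.imp fun x z hxz => le_of_not_gt fun hlt => hxz fun y => ?_
    calc |⟪K y, x - z⟫| ≤ H * ‖x - z‖ := hK.abs_inner_le y _
      _ ≤ H * (H * A / 2 ^ k) := by gcongr
      _ = A * H ^ 2 / 2 ^ k := by ring
  have hratio : 2 * (H * A) / (H * A / 2 ^ k) = 2 * 2 ^ k := by field_simp
  calc (T.card : ℝ) ≤ (1 + 2 * (H * A) / (H * A / 2 ^ k)) ^ Module.finrank ℝ E :=
        card_le_of_pairwise_le_norm_sub (by positivity) (by positivity)
          (fun x hx => hK.norm_le_of_integral_abs_le (hS x (hTS hx))) hsep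
    _ ≤ (2 ^ (k + 2)) ^ Module.finrank ℝ E := by
        rw [hratio, pow_add]
        gcongr
        linarith [one_le_pow₀ (one_le_two : (1 : ℝ) ≤ 2) (n := k)]
    _ ≤ (Real.exp 1 ^ (k + 2)) ^ Module.finrank ℝ E := by
        gcongr
        linarith [Real.exp_one_gt_d9]
    _ = Real.exp (Module.finrank ℝ E * (k + 2)) := by
        rw [← Real.exp_nat_mul, ← Real.exp_nat_mul]
        push_cast
        ring_nf

theorem exists_coarse_net [Fintype Y] (hK : IsParsevalFrame μ K H) (hH : 0 < H)
    (hA : 0 < A) (hS : ∀ f ∈ S, ∫ y, |⟪K y, f⟫| ∂μ ≤ A) (k : ℕ) :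
    ∃ T : Finset E, ↑T ⊆ S ∧
      (T.card : ℝ) ≤ Real.exp (66 * 2 ^ k * Real.log (4 * Fintype.card Y)) ∧
      ∀ f ∈ S, ∃ g ∈ T, f - g ∈ slab K (A * H ^ 2 / 2 ^ k) := by
  classical
  have := nonempty_of_isProbabilityMeasure μ
  have hn_pos : 0 < 2 ^ k := by positivity
  set ρ := √((2 * H * A) ^ 2 / (2 ^ k : ℕ)) with hρ
  set η := A * H ^ 2 / 2 ^ k / 2 with hη
  have hη_pos : 0 < η := by positivity
  obtain ⟨B, -, hB_card, hB⟩ := exists_finset_cover_of_forall_card_le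
    (S := Metric.closedBall (0 : E) ρ) (zero_mem_slab hη_pos.le) (fun _ => neg_mem_slab)
    fun T hT hsep => card_le_of_pairwise_sub_notMem_slab hH hK.norm_le hη_pos
      (fun x hx => by simpa using hT hx) hsep
  let averages : Finset E := Finset.univ.image fun s : Fin (2 ^ k) → Y × Bool =>
    ((2 ^ k : ℕ) : ℝ)⁻¹ • ∑ i, signedAtom K A (s i)
  have haverages : averages.card ≤ (2 * Fintype.card Y) ^ 2 ^ k := by
    refine Finset.card_image_le.trans ?_
    simp [mul_comm]
  have hsum : ∀ f ∈ S, ∃ g ∈ Finset.image₂ (· + ·) averages B, f - g ∈ slab K η := fun f hf => by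
    obtain ⟨s, hs⟩ := hK.exists_norm_sub_average_signedAtom_le (hS f hf) hn_pos
    obtain ⟨b, hb, hsb⟩ := hB _ (mem_closedBall_zero_iff.2 hs)
    refine ⟨_, Finset.mem_image₂_of_mem (Finset.mem_image_of_mem _ (Finset.mem_univ s)) hb, ?_⟩
    rwa [← sub_sub]
  obtain ⟨T, hTS, hT_card, hT⟩ := exists_internal_cover
    (B' := slab K (A * H ^ 2 / 2 ^ k)) (fun u hu v hv => by
      simpa only [hη, add_halves] using sub_mem_slab hu hv) hsum
  refine ⟨T, hTS, ?_, hT⟩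
  have hexponent : 4 * H ^ 2 * Real.log (4 * Fintype.card Y) * ρ ^ 2 / η ^ 2 =
      64 * (2 ^ k : ℕ) * Real.log (4 * Fintype.card Y) := by
    rw [hρ, Real.sq_sqrt (by positivity), hη]
    push_cast
    field_simp
    ring
  calc (T.card : ℝ) ≤ averages.card * B.card := by
        exact_mod_cast hT_card.trans (Finset.card_image₂_le _ _ _)
    _ ≤ (2 * Fintype.card Y : ℝ) ^ 2 ^ k *
        (2 * Real.exp (64 * (2 ^ k : ℕ) * Real.log (4 * Fintype.card Y))) := by
        rw [← hexponent]
        gcongr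
        exact_mod_cast haverages
    _ ≤ Real.exp (66 * 2 ^ k * Real.log (4 * Fintype.card Y)) := by
        exact_mod_cast two_mul_pow_mul_exp_le (c := Fintype.card Y)
          (by exact_mod_cast Fintype.card_pos) hn_pos

end IsParsevalFrame

end FrameNets

/-! ### Chaining -/

section Chaining

variable {Y : Type*} {F : Set (Y → ℝ)} {L V : ℝ} {T : ℕ → Finset (Y → ℝ)}

/-- Successive approximations of a class of functions `F` in the uniform norm: the net `T k` has
radius `L / 2 ^ k`, and the coarsest one contains only the zero function. -/
structure IsChainingNet (F : Set (Y → ℝ)) (L : ℝ) (T : ℕ → Finset (Y → ℝ)) : Prop where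
  subset : ∀ k, ↑(T k) ⊆ F
  eq_zero : ∀ g ∈ T 0, g = 0
  exists_near : ∀ k, ∀ f ∈ F, ∃ g ∈ T k, ∀ y, |f y - g y| ≤ L / 2 ^ k

open Classical in
/-- The pairs of neighbouring elements of the nets `T (k + 1)` and `T k`. -/
noncomputable def chainLinks (L : ℝ) (T : ℕ → Finset (Y → ℝ)) (k : ℕ) :
    Finset ((Y → ℝ) × (Y → ℝ)) :=
  {p ∈ T (k + 1) ×ˢ T k | ∀ y, |p.1 y - p.2 y| ≤ 2 * L / 2 ^ k}

theorem mem_chainLinks {k : ℕ} {p : (Y → ℝ) × (Y → ℝ)} :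
    p ∈ chainLinks L T k ↔
      (p.1 ∈ T (k + 1) ∧ p.2 ∈ T k) ∧ ∀ y, |p.1 y - p.2 y| ≤ 2 * L / 2 ^ k := by
  simp [chainLinks]

theorem card_chainLinks_le (k : ℕ) :
    (chainLinks L T k).card ≤ (T (k + 1)).card * (T k).card := by
  rw [← Finset.card_product]
  exact Finset.card_le_card fun p hp => Finset.mem_product.2 (mem_chainLinks.1 hp).1

theorem mk_mem_chainLinks {k : ℕ} {f g h : Y → ℝ} (hL : 0 ≤ L) (hg : g ∈ T (k + 1)) (hh : h ∈ T k)
    (hfg : ∀ y, |f y - g y| ≤ L / 2 ^ (k + 1)) (hfh : ∀ y, |f y - h y| ≤ L / 2 ^ k) :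
    (g, h) ∈ chainLinks L T k := by
  refine mem_chainLinks.2 ⟨⟨hg, hh⟩, fun y => ?_⟩
  calc |g y - h y| ≤ |g y - f y| + |f y - h y| := abs_sub_le _ _ _
    _ ≤ L / 2 ^ k + L / 2 ^ k := by
        rw [abs_sub_comm]
        gcongr
        · refine (hfg y).trans ?_
          gcongr
          · exact one_le_two
          · exact k.le_succ
        · exact hfh y
    _ = 2 * L / 2 ^ k := by ring

theorem sum_chainLinks_two_mul_exp_lt_one {h w : ℕ → ℝ}
    (hcard : ∀ k, ((T k).card : ℝ) ≤ Real.exp (h k))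
    (hw : ∀ k, h k + h (k + 1) + (k + 2) ≤ w k) (n : ℕ) :
    ∑ i : Σ k : Fin n, chainLinks L T k, 2 * Real.exp (-w i.1) < 1 := by
  have hlevel : ∀ k : ℕ, ∑ _p : chainLinks L T k, 2 * Real.exp (-w k) ≤ 1 / 2 ^ (k + 1) := by
    intro k
    rw [Finset.sum_const, nsmul_eq_mul, Finset.card_univ, Fintype.card_coe]
    calc ((chainLinks L T k).card : ℝ) * (2 * Real.exp (-w k))
        ≤ (Real.exp (h (k + 1)) * Real.exp (h k)) *
            (2 * Real.exp (-(h k + h (k + 1) + (k + 2)))) := by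
          gcongr
          · calc ((chainLinks L T k).card : ℝ) ≤ (T (k + 1)).card * (T k).card := by
                  exact_mod_cast card_chainLinks_le k
              _ ≤ _ := mul_le_mul (hcard _) (hcard _) (by positivity) (by positivity)
          · exact hw k
      _ = 2 / Real.exp 1 ^ (k + 2) := by
          rw [← Real.exp_nat_mul, div_eq_mul_inv, ← Real.exp_neg, ← Real.exp_add, mul_left_comm,
            ← Real.exp_add]
          push_cast
          ring_nf
      _ ≤ 2 / 2 ^ (k + 2) := by
          gcongr
          linarith [Real.exp_one_gt_d9]
      _ = 1 / 2 ^ (k + 1) := by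
          field_simp
          ring
  have hgeom : ∀ n : ℕ, ∑ k ∈ Finset.range n, (1 : ℝ) / 2 ^ (k + 1) = 1 - 1 / 2 ^ n := by
    intro n
    induction n with
    | zero => simp
    | succ n ih =>
      rw [Finset.sum_range_succ, ih]
      field_simp
      ring
  rw [Fintype.sum_sigma]
  calc ∑ k : Fin n, ∑ _p : chainLinks L T k, 2 * Real.exp (-w k)
      ≤ ∑ k : Fin n, (1 : ℝ) / 2 ^ ((k : ℕ) + 1) := Finset.sum_le_sum fun k _ => hlevel k
    _ = 1 - 1 / 2 ^ n := by
        rw [Fin.sum_univ_eq_sum_range (fun k => (1 : ℝ) / 2 ^ (k + 1)), hgeom]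
    _ < 1 := sub_lt_self _ (by positivity)

theorem IsChainingNet.abs_le (hT : IsChainingNet F L T) {f : Y → ℝ} (hf : f ∈ F) (y : Y) :
    |f y| ≤ L := by
  obtain ⟨g, hg, hfg⟩ := hT.exists_near 0 f hf
  simpa [hT.eq_zero g hg] using hfg y

variable [MeasurableSpace Y] {μ : Measure Y}

theorem integral_sub_sq_le {f g : Y → ℝ} {c : ℝ} (hf : Integrable f μ) (hg : Integrable g μ)
    (hf_nonneg : ∀ y, 0 ≤ f y) (hg_nonneg : ∀ y, 0 ≤ g y) (hfV : ∫ y, f y ∂μ ≤ V)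
    (hgV : ∫ y, g y ∂μ ≤ V) (hc : 0 ≤ c) (hfg : ∀ y, |f y - g y| ≤ c) :
    ∫ y, (f y - g y) ^ 2 ∂μ ≤ 2 * c * V := by
  have hpointwise : ∀ y, (f y - g y) ^ 2 ≤ c * (f y + g y) := fun y => by
    have hsum : |f y - g y| ≤ f y + g y :=
      abs_le.2 ⟨by linarith [hf_nonneg y], by linarith [hg_nonneg y]⟩
    rw [← sq_abs, sq]
    exact mul_le_mul (hfg y) hsum (abs_nonneg _) hc
  calc ∫ y, (f y - g y) ^ 2 ∂μ ≤ ∫ y, c * (f y + g y) ∂μ :=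
        integral_mono_of_nonneg (.of_forall fun y => sq_nonneg _) ((hf.add hg).const_mul c)
          (.of_forall hpointwise)
    _ = c * (∫ y, f y ∂μ + ∫ y, g y ∂μ) := by rw [integral_const_mul, integral_add hf hg]
    _ ≤ c * (V + V) := by gcongr
    _ = 2 * c * V := by ring

variable [IsProbabilityMeasure μ] {m : ℕ} {u : ℕ → ℝ}

namespace IsChainingNet

theorem integrable (hT : IsChainingNet F L T) {f : Y → ℝ} (hf : f ∈ F) (hf_meas : Measurable f) :
    Integrable f μ :=
  .of_bound hf_meas.aestronglyMeasurable L (.of_forall (hT.abs_le hf))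

theorem abs_samplingError_le_of_chainLinks (hT : IsChainingNet F L T) (hL : 0 ≤ L)
    (hF_meas : ∀ f ∈ F, Measurable f) {n : ℕ} {x : Fin m → Y}
    (hx : ∀ k < n, ∀ p ∈ chainLinks L T k, |samplingError μ x fun y => p.1 y - p.2 y| ≤ u k)
    {f : Y → ℝ} (hf : f ∈ F) :
    |samplingError μ x f| ≤ ∑ k ∈ Finset.range n, u k + 2 * L / 2 ^ n := by
  choose g hgT hg using fun k => hT.exists_near k f hf
  have hint : ∀ f ∈ F, Integrable f μ := fun f hf => hT.integrable hf (hF_meas f hf)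
  have hsub : ∀ f ∈ F, ∀ g ∈ F, |samplingError μ x f| ≤
      |samplingError μ x g| + |samplingError μ x fun y => f y - g y| := fun f hf g hg => by
    rw [samplingError_sub (hint f hf) (hint g hg)]
    linarith [abs_sub_abs_le_abs_sub (samplingError μ x f) (samplingError μ x g)]
  have hgF : ∀ k, g k ∈ F := fun k => hT.subset k (hgT k)
  have hchain : ∀ k ≤ n, |samplingError μ x (g k)| ≤ ∑ i ∈ Finset.range k, u i := by
    intro k
    induction k with
    | zero => simp [hT.eq_zero _ (hgT 0), samplingError]
    | succ k ih =>
      intro hk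
      rw [Finset.sum_range_succ]
      exact (hsub _ (hgF (k + 1)) _ (hgF k)).trans (add_le_add (ih (by omega))
        (hx k hk _ (mk_mem_chainLinks hL (hgT (k + 1)) (hgT k) (hg (k + 1)) (hg k))))
  refine (hsub f hf _ (hgF n)).trans (add_le_add (hchain n le_rfl) ?_)
  rw [mul_div_assoc]
  exact abs_samplingError_le (hg n) x

theorem exists_forall_abs_samplingError_le (hT : IsChainingNet F L T) (hL : 0 < L) (hV : 1 ≤ V)
    (hF_meas : ∀ f ∈ F, Measurable f) (hF_nonneg : ∀ f ∈ F, ∀ y, 0 ≤ f y)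
    (hFV : ∀ f ∈ F, ∫ y, f y ∂μ ≤ V) {h : ℕ → ℝ}
    (hcard : ∀ k, ((T k).card : ℝ) ≤ Real.exp (h k)) (hu : ∀ k, 0 ≤ u k) (hu2 : ∀ k, u k ≤ 2)
    (hm : ∀ k, h k + h (k + 1) + (k + 2) ≤ m * u k ^ 2 * 2 ^ k / (16 * (V * L))) (n : ℕ) :
    ∃ x : Fin m → Y, ∀ f ∈ F,
      |samplingError μ x f| ≤ ∑ k ∈ Finset.range n, u k + 2 * L / 2 ^ n := by
  let ι := Σ k : Fin n, chainLinks L T k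
  have hmem : ∀ i : ι, (i.2.1.1 ∈ F ∧ i.2.1.2 ∈ F) ∧
      ∀ y, |i.2.1.1 y - i.2.1.2 y| ≤ 2 * L / 2 ^ (i.1 : ℕ) := fun i => by
    obtain ⟨⟨hfst, hsnd⟩, hnear⟩ := mem_chainLinks.1 i.2.2
    exact ⟨⟨hT.subset _ hfst, hT.subset _ hsnd⟩, hnear⟩
  have hint : ∀ f ∈ F, Integrable f μ := fun f hf => hT.integrable hf (hF_meas f hf)
  have hvariance : ∀ i : ι, ∫ y, (i.2.1.1 y - i.2.1.2 y) ^ 2 ∂μ ≤ 4 * V * L / 2 ^ (i.1 : ℕ) :=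
    fun i => by
      obtain ⟨⟨hfst, hsnd⟩, hnear⟩ := hmem i
      refine (integral_sub_sq_le (hint _ hfst) (hint _ hsnd) (hF_nonneg _ hfst)
        (hF_nonneg _ hsnd) (hFV _ hfst) (hFV _ hsnd) (by positivity) hnear).trans_eq ?_
      ring
  have hexponent : ∀ k, m * u k ^ 2 * 2 ^ k / (16 * (V * L)) =
      m * u k ^ 2 / (4 * (4 * V * L / 2 ^ k)) := fun k => by
    field_simp
    ring
  simp only [hexponent] at hm
  have hbudget := sum_chainLinks_two_mul_exp_lt_one (L := L) hcard hm n
  obtain ⟨x, hx⟩ := _root_.exists_forall_abs_samplingError_le (μ := μ) (m := m)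
    (Z := fun (i : ι) y => i.2.1.1 y - i.2.1.2 y)
    (v := fun i => 4 * V * L / 2 ^ (i.1 : ℕ)) (u := fun i => u i.1)
    (fun i => (hF_meas _ (hmem i).1.1).sub (hF_meas _ (hmem i).1.2)) (fun i => by positivity)
    (fun i => hu _) (fun i => hu2 _)
    (fun i y => ((hmem i).2 y).trans (by gcongr; linarith)) hvariance hbudget
  exact ⟨x, fun f hf => hT.abs_samplingError_le_of_chainLinks hL.le hF_meas
    (fun k hk p hp => hx ⟨⟨k, hk⟩, ⟨p, hp⟩⟩) hf⟩

end IsChainingNet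

end Chaining

section ChainWeight

variable {ε : ℝ} {k₀ : ℕ}

/-- The error allotted to the `k`-th level of a chain: it is constant on the levels `k < k₀`, where
the entropy of the nets grows like `2 ^ k`, and decays geometrically on the following ones, where
the entropy only grows linearly. -/
noncomputable def chainWeight (k₀ : ℕ) (ε : ℝ) (k : ℕ) : ℝ :=
  if k < k₀ then ε / (4 * (k₀ + 1)) else ε / 8 * (3 / 4) ^ (k - k₀)

theorem chainWeight_of_lt {k : ℕ} (hk : k < k₀) : chainWeight k₀ ε k = ε / (4 * (k₀ + 1)) :=
  if_pos hk

theorem chainWeight_add (k₀ : ℕ) (ε : ℝ) (j : ℕ) :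
    chainWeight k₀ ε (k₀ + j) = ε / 8 * (3 / 4) ^ j := by
  simp [chainWeight]

theorem chainWeight_nonneg (hε : 0 ≤ ε) (k : ℕ) : 0 ≤ chainWeight k₀ ε k := by
  unfold chainWeight
  split_ifs <;> positivity

theorem chainWeight_le_self (hε : 0 ≤ ε) (k : ℕ) : chainWeight k₀ ε k ≤ ε := by
  unfold chainWeight
  split_ifs
  · exact div_le_self hε (by linarith [k₀.cast_nonneg (α := ℝ)])
  · have hpow : ((3 : ℝ) / 4) ^ (k - k₀) ≤ 1 := pow_le_one₀ (by norm_num) (by norm_num)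
    nlinarith

theorem sum_chainWeight_le (hε : 0 ≤ ε) (n : ℕ) :
    ∑ k ∈ Finset.range (k₀ + n), chainWeight k₀ ε k ≤ 3 / 4 * ε := by
  have hgeom : ∑ j ∈ Finset.range n, ((3 : ℝ) / 4) ^ j ≤ 4 := by
    rw [geom_sum_eq (by norm_num), div_le_iff_of_neg (by norm_num)]
    linarith [show (0 : ℝ) ≤ (3 / 4) ^ n by positivity]
  have hconst : ∑ k ∈ Finset.range k₀, chainWeight k₀ ε k ≤ ε / 4 := by
    rw [Finset.sum_congr rfl fun k hk => chainWeight_of_lt (Finset.mem_range.1 hk),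
      Finset.sum_const, Finset.card_range, nsmul_eq_mul, mul_div_assoc',
      div_le_iff₀ (by positivity)]
    nlinarith
  have hdecay : ∑ j ∈ Finset.range n, chainWeight k₀ ε (k₀ + j) ≤ ε / 2 := by
    simp only [chainWeight_add, ← Finset.mul_sum]
    nlinarith
  rw [Finset.sum_range_add]
  linarith

variable {Λ b N G : ℝ} {h : ℕ → ℝ}

theorem entropy_le_of_coarse (hΛ : 1 ≤ Λ) (hb : 70000 * ((k₀ + 1) ^ 2 * Λ) ≤ b)
    (hh : ∀ k, h k ≤ 66 * 2 ^ k * Λ) (k : ℕ) :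
    h k + h (k + 1) + (k + 2) ≤ b / (256 * (k₀ + 1) ^ 2) * 2 ^ k := by
  have hk : (k : ℝ) + 1 ≤ 2 ^ k := by exact_mod_cast k.lt_two_pow_self
  have hrate : 70000 / 256 * Λ ≤ b / (256 * (k₀ + 1) ^ 2) := by
    rw [le_div_iff₀ (by positivity)]
    linarith
  calc h k + h (k + 1) + (k + 2) ≤ 66 * 2 ^ k * Λ + 66 * 2 ^ (k + 1) * Λ + 2 * 2 ^ k := by
        linarith [hh k, hh (k + 1)]
    _ ≤ 200 * Λ * 2 ^ k := by
        rw [pow_succ]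
        nlinarith
    _ ≤ 70000 / 256 * Λ * 2 ^ k := by
        gcongr
        norm_num
    _ ≤ _ := by gcongr

theorem entropy_le_of_fine (hΛ : 1 ≤ Λ) (hb : 70000 * ((k₀ + 1) ^ 2 * Λ) ≤ b)
    (hN : N ≤ 2 * 2 ^ k₀) (hh : ∀ k : ℕ, h k ≤ N * (k + 2)) (j : ℕ) :
    h (k₀ + j) + h (k₀ + j + 1) + ((k₀ + j : ℕ) + 2) ≤ b / 1024 * 2 ^ k₀ * (9 / 8) ^ j := by
  have hrate : 68 * ((k₀ : ℝ) + 1) ≤ b / 1024 := by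
    have hle : (k₀ : ℝ) + 1 ≤ (k₀ + 1) ^ 2 * Λ := by nlinarith [k₀.cast_nonneg (α := ℝ)]
    linarith
  have hbernoulli : 1 + j * (1 / 8 : ℝ) ≤ (9 / 8) ^ j := by
    refine (one_add_mul_le_pow (by norm_num) j).trans_eq ?_
    norm_num
  have hpow : (1 : ℝ) ≤ 2 ^ k₀ := one_le_pow₀ one_le_two
  have hentropy : ∀ i : ℕ, i ≤ k₀ + j + 1 → h i ≤ 2 ^ k₀ * (2 * (k₀ + j + 3)) := fun i hi => by
    have hi' : (i : ℝ) ≤ k₀ + j + 1 := by exact_mod_cast hi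
    calc h i ≤ N * (i + 2) := hh i
      _ ≤ (2 * 2 ^ k₀) * (k₀ + j + 3) :=
          mul_le_mul hN (by linarith) (by positivity) (by positivity)
      _ = 2 ^ k₀ * (2 * (k₀ + j + 3)) := by ring
  have hlast : (k₀ + j : ℕ) + (2 : ℝ) ≤ 2 ^ k₀ * (k₀ + j + 3) := by
    push_cast
    nlinarith [k₀.cast_nonneg (α := ℝ), j.cast_nonneg (α := ℝ)]
  calc h (k₀ + j) + h (k₀ + j + 1) + ((k₀ + j : ℕ) + 2)
      ≤ 2 ^ k₀ * (5 * (k₀ + j + 3)) := by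
        linarith [hentropy (k₀ + j) (Nat.le_succ _), hentropy (k₀ + j + 1) le_rfl]
    _ ≤ 2 ^ k₀ * (68 * (k₀ + 1) * (1 + j * (1 / 8))) := by
        refine mul_le_mul_of_nonneg_left ?_ (by positivity)
        nlinarith [mul_nonneg (k₀.cast_nonneg (α := ℝ)) (j.cast_nonneg (α := ℝ))]
    _ ≤ 2 ^ k₀ * (b / 1024 * (9 / 8) ^ j) := by
        refine mul_le_mul_of_nonneg_left ?_ (by positivity)
        exact mul_le_mul hrate hbernoulli (by positivity) (by linarith)
    _ = _ := by ring

theorem entropy_le_mul_chainWeight_sq {m : ℝ} (hε : 0 < ε) (hG : 0 < G) (hΛ : 1 ≤ Λ)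
    (hm : 70000 * G * ε⁻¹ ^ 2 * (k₀ + 1) ^ 2 * Λ ≤ m) (hN : N ≤ 2 * 2 ^ k₀)
    (hcoarse : ∀ k, h k ≤ 66 * 2 ^ k * Λ) (hfine : ∀ k : ℕ, h k ≤ N * (k + 2)) (k : ℕ) :
    h k + h (k + 1) + (k + 2) ≤ m * chainWeight k₀ ε k ^ 2 * 2 ^ k / (16 * G) := by
  have hb : 70000 * ((k₀ + 1) ^ 2 * Λ) ≤ m * ε ^ 2 / G := by
    rw [le_div_iff₀ hG]
    calc 70000 * ((k₀ + 1) ^ 2 * Λ) * G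
        = 70000 * G * ε⁻¹ ^ 2 * (k₀ + 1) ^ 2 * Λ * ε ^ 2 := by field_simp
      _ ≤ m * ε ^ 2 := by gcongr
  rcases lt_or_ge k k₀ with hk | hk
  · refine (entropy_le_of_coarse hΛ hb hcoarse k).trans_eq ?_
    rw [chainWeight_of_lt hk]
    field_simp
    ring
  · obtain ⟨j, rfl⟩ := Nat.exists_eq_add_of_le hk
    refine (entropy_le_of_fine hΛ hb hN hfine j).trans_eq ?_
    have hpow : ((9 : ℝ) / 8) ^ j = ((3 / 4) ^ j) ^ 2 * 2 ^ j := by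
      rw [← pow_mul, mul_comm j 2, pow_mul, ← mul_pow]
      norm_num
    rw [chainWeight_add, hpow, pow_add]
    field_simp
    ring

end ChainWeight

/-! ### Sampling discretization of modulars on a frame -/

section FrameSampling

open scoped RealInnerProductSpace

variable {Y E : Type*} [MeasurableSpace Y] [NormedAddCommGroup E] [InnerProductSpace ℝ E]
  {μ : Measure Y} {K : Y → E} {H V a q ε : ℝ} {Φ : ℝ → ℝ} {m : ℕ}

/-- The function `Φ(|f|)`, where `f` is the function represented by `e` on the frame `K`. -/
noncomputable def frameModular (Φ : ℝ → ℝ) (K : Y → E) (e : E) (y : Y) : ℝ :=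
  Φ |⟪K y, e⟫|

/-- The vectors representing functions whose `Φ`-modular is at most `V`. -/
def modularBall (Φ : ℝ → ℝ) (μ : Measure Y) (K : Y → E) (V : ℝ) : Set E :=
  {e | ∫ y, frameModular Φ K e y ∂μ ≤ V}

/-- A uniform bound for the functions represented by `modularBall Φ μ K V`, see
`IsParsevalFrame.abs_inner_le_modularRadius`. -/
noncomputable def modularRadius (Φ : ℝ → ℝ) (a H V : ℝ) : ℝ :=
  (1 + a / Φ 1 * V) * H ^ 2

/-- The number of random points for which a union bound over one net per modular discretizes `n`
modulars on a frame simultaneously, with error `ε`. -/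
noncomputable def netSampleSize (Φ : ℝ → ℝ) (a q H V ε : ℝ) (n : ℕ) : ℝ :=
  16 * V * Φ (modularRadius Φ a H V) * ε⁻¹ ^ 2 *
    (H ^ 2 * (4 * (q * a * Φ (modularRadius Φ a H V)) / ε + 3) + 2 * n)

theorem zero_mem_modularBall (hΦ : IsPhiPrefun Φ) (hV : 0 ≤ V) : 0 ∈ modularBall Φ μ K V := by
  simpa [modularBall, frameModular, hΦ.map_zero] using hV

namespace IsParsevalFrame

theorem measurable_frameModular (hK : IsParsevalFrame μ K H) (hΦ : IsPhiPrefun Φ) (e : E) :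
    Measurable (frameModular Φ K e) :=
  hΦ.measurable_comp_abs (hK.measurable_inner e)

variable [IsProbabilityMeasure μ] {e f : E}

theorem integrable_frameModular (hK : IsParsevalFrame μ K H) (hΦ : IsPhiPrefun Φ) (e : E) :
    Integrable (frameModular Φ K e) μ :=
  hΦ.integrable_comp_abs (hK.measurable_inner e) fun y => hK.abs_inner_le y e

theorem integral_abs_inner_le (hK : IsParsevalFrame μ K H) (hΦ : IsWeakPhi Φ a q)
    (he : e ∈ modularBall Φ μ K V) : ∫ y, |⟪K y, e⟫| ∂μ ≤ 1 + a / Φ 1 * V := by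
  have hint := hK.integrable_frameModular hΦ.toIsPhiPrefun e
  have hcoeff : 0 ≤ a / Φ 1 := div_nonneg (zero_le_one.trans hΦ.one_le_a) (hΦ.pos one_pos).le
  calc ∫ y, |⟪K y, e⟫| ∂μ ≤ ∫ y, (1 + a / Φ 1 * frameModular Φ K e y) ∂μ :=
        integral_mono (hK.integrable_inner e).abs ((integrable_const _).add (hint.const_mul _))
          fun y => hΦ.le_one_add_mul_apply (abs_nonneg _)
    _ = 1 + a / Φ 1 * ∫ y, frameModular Φ K e y ∂μ := by
        rw [integral_add (integrable_const _) (hint.const_mul _), integral_const_mul]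
        simp
    _ ≤ 1 + a / Φ 1 * V := by
        gcongr
        exact he

theorem abs_inner_le_modularRadius (hK : IsParsevalFrame μ K H) (hΦ : IsWeakPhi Φ a q)
    (he : e ∈ modularBall Φ μ K V) (y : Y) : |⟪K y, e⟫| ≤ modularRadius Φ a H V :=
  hK.abs_inner_le_of_integral_abs_le (hK.integral_abs_inner_le hΦ he) y

theorem frameModular_le (hK : IsParsevalFrame μ K H) (hΦ : IsWeakPhi Φ a q)
    (he : e ∈ modularBall Φ μ K V) (y : Y) :
    frameModular Φ K e y ≤ Φ (modularRadius Φ a H V) :=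
  hΦ.le_of_le (abs_nonneg _) (hK.abs_inner_le_modularRadius hΦ he y)

theorem abs_frameModular_sub_le (hK : IsParsevalFrame μ K H) (hΦ : IsWeakPhi Φ a q)
    (hR : 0 < modularRadius Φ a H V) (he : e ∈ modularBall Φ μ K V)
    (hf : f ∈ modularBall Φ μ K V) {t : ℝ} (ht : 0 < t)
    (hef : e - f ∈ slab K (modularRadius Φ a H V / t)) (y : Y) :
    |frameModular Φ K e y - frameModular Φ K f y| ≤ q * a * Φ (modularRadius Φ a H V) / t := by
  set R := modularRadius Φ a H V
  have hΦR := hΦ.pos hR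
  have ha := hΦ.one_le_a
  have hq := hΦ.one_le_q
  calc |frameModular Φ K e y - frameModular Φ K f y|
      ≤ q * a * Φ R / R * |⟪K y, e⟫ - ⟪K y, f⟫| :=
        hΦ.abs_sub_le (hK.abs_inner_le_modularRadius hΦ he y)
          (hK.abs_inner_le_modularRadius hΦ hf y)
    _ ≤ q * a * Φ R / R * (R / t) := by
        rw [← inner_sub_right]
        gcongr
        exact hef y
    _ = q * a * Φ R / t := by field_simp

theorem integral_frameModular_sq_le (hK : IsParsevalFrame μ K H) (hΦ : IsWeakPhi Φ a q)
    (he : e ∈ modularBall Φ μ K V) :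
    ∫ y, frameModular Φ K e y ^ 2 ∂μ ≤ V * Φ (modularRadius Φ a H V) := by
  set R := modularRadius Φ a H V
  have hnonneg : ∀ y, 0 ≤ frameModular Φ K e y := fun y => hΦ.nonneg _ (abs_nonneg _)
  obtain ⟨y₀⟩ := nonempty_of_isProbabilityMeasure μ
  have hΦR : 0 ≤ Φ R := (hnonneg y₀).trans (hK.frameModular_le hΦ he y₀)
  calc ∫ y, frameModular Φ K e y ^ 2 ∂μ ≤ ∫ y, Φ R * frameModular Φ K e y ∂μ :=
        integral_mono_of_nonneg (.of_forall fun y => sq_nonneg _)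
          ((hK.integrable_frameModular hΦ.toIsPhiPrefun e).const_mul _) (.of_forall fun y => by
            simp only [sq]
            exact mul_le_mul_of_nonneg_right (hK.frameModular_le hΦ he y) (hnonneg y))
    _ ≤ Φ R * V := by
        rw [integral_const_mul]
        gcongr
        exact he
    _ = V * Φ R := mul_comm _ _

theorem abs_samplingError_le_of_near (hK : IsParsevalFrame μ K H) (hΦ : IsPhiPrefun Φ)
    {x : Fin m → Y} {δ : ℝ} (hf : |samplingError μ x (frameModular Φ K f)| ≤ ε)
    (hef : ∀ y, |frameModular Φ K e y - frameModular Φ K f y| ≤ δ) :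
    |samplingError μ x (frameModular Φ K e)| ≤ ε + 2 * δ := by
  have hsub := abs_samplingError_le (μ := μ) hef x
  rw [samplingError_sub (hK.integrable_frameModular hΦ e) (hK.integrable_frameModular hΦ f)]
    at hsub
  linarith [abs_sub_abs_le_abs_sub (samplingError μ x (frameModular Φ K e))
    (samplingError μ x (frameModular Φ K f))]

end IsParsevalFrame

theorem modularRadius_pos (hΦ : IsWeakPhi Φ a q) (hV : 0 ≤ V) (hH : 0 < H) :
    0 < modularRadius Φ a H V := by
  have ha := hΦ.one_le_a
  have hΦ1 := hΦ.pos one_pos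
  unfold modularRadius
  positivity

theorem sum_card_mul_exp_lt_one {ι : Type*} [Fintype ι] {n h b : ι → ℝ}
    (hn : ∀ i, n i ≤ Real.exp (h i)) (hb : ∀ i, h i + 2 * Fintype.card ι ≤ b i) :
    ∑ i, n i * (2 * Real.exp (-b i)) < 1 := by
  have hterm : ∀ i, n i * (2 * Real.exp (-b i)) ≤ 2 * Real.exp (-(2 * Fintype.card ι)) := fun i =>
    calc n i * (2 * Real.exp (-b i)) ≤ Real.exp (h i) * (2 * Real.exp (-b i)) := by
          gcongr
          exact hn i
      _ = 2 * Real.exp (h i - b i) := by rw [sub_eq_add_neg, Real.exp_add]; ring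
      _ ≤ 2 * Real.exp (-(2 * Fintype.card ι)) := by
          gcongr
          linarith [hb i]
  calc ∑ i, n i * (2 * Real.exp (-b i))
      ≤ ∑ _i : ι, 2 * Real.exp (-(2 * Fintype.card ι)) := Finset.sum_le_sum fun i _ => hterm i
    _ = 2 * Fintype.card ι * Real.exp (-(2 * Fintype.card ι)) := by
        rw [Finset.sum_const, Finset.card_univ, nsmul_eq_mul]
        ring
    _ < 1 := by
        rw [Real.exp_neg, ← div_eq_mul_inv, div_lt_one (Real.exp_pos _)]
        linarith [Real.add_one_le_exp (2 * (Fintype.card ι : ℝ))]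

variable [IsProbabilityMeasure μ] [FiniteDimensional ℝ E]

namespace IsParsevalFrame

theorem exists_finset_modularBall_near (hK : IsParsevalFrame μ K H) (hΦ : IsWeakPhi Φ a q)
    (hH : 0 < H) (hV : 0 ≤ V) (hε : 0 < ε) :
    ∃ T : Finset E, ↑T ⊆ modularBall Φ μ K V ∧
      (T.card : ℝ) ≤ Real.exp (H ^ 2 * (q * a * Φ (modularRadius Φ a H V) / ε + 3)) ∧
      ∀ e ∈ modularBall Φ μ K V, ∃ g ∈ T,
        ∀ y, |frameModular Φ K e y - frameModular Φ K g y| ≤ ε := by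
  have hR := modularRadius_pos hΦ hV hH
  have ha := hΦ.one_le_a
  have hq := hΦ.one_le_q
  have hΦ1 := hΦ.pos one_pos
  have hΦR := hΦ.pos hR
  set L := q * a * Φ (modularRadius Φ a H V)
  obtain ⟨T, hTS, hT_card, hT⟩ := hK.exists_fine_net hH (A := 1 + a / Φ 1 * V) (by positivity)
    (fun e he => hK.integral_abs_inner_le hΦ he) ⌈L / ε⌉₊
  refine ⟨T, hTS, hT_card.trans (Real.exp_le_exp.2 ?_), fun e he => ?_⟩
  · have hceil := Nat.ceil_lt_add_one (show 0 ≤ L / ε by positivity)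
    exact mul_le_mul hK.finrank_le (by linarith) (by positivity) (by positivity)
  · obtain ⟨g, hg, heg⟩ := hT e he
    refine ⟨g, hg, fun y =>
      (hK.abs_frameModular_sub_le hΦ hR he (hTS hg) (by positivity) heg y).trans ?_⟩
    rw [div_le_iff₀ (by positivity), ← div_le_iff₀' hε]
    calc L / ε ≤ ⌈L / ε⌉₊ := Nat.le_ceil _
      _ ≤ 2 ^ ⌈L / ε⌉₊ := by exact_mod_cast Nat.lt_two_pow_self.le

theorem exists_forall_family_abs_samplingError_le {ι : Type*} [Fintype ι] {Φ : ι → ℝ → ℝ}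
    {a q V ε : ι → ℝ} (hK : IsParsevalFrame μ K H) (hΦ : ∀ i, IsWeakPhi (Φ i) (a i) (q i))
    (hH : 0 < H) (hV : ∀ i, 1 ≤ V i) (hε : ∀ i, 0 < ε i) (hε4 : ∀ i, ε i ≤ 4)
    (hm : ∀ i, netSampleSize (Φ i) (a i) (q i) H (V i) (ε i) (Fintype.card ι) ≤ m) :
    ∃ x : Fin m → Y, ∀ i, ∀ e ∈ modularBall (Φ i) μ K (V i),
      |samplingError μ x (frameModular (Φ i) K e)| ≤ ε i := by
  set R : ι → ℝ := fun i => modularRadius (Φ i) (a i) H (V i)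
  have hΦR : ∀ i, 0 < Φ i (R i) := fun i =>
    (hΦ i).pos (modularRadius_pos (hΦ i) (zero_le_one.trans (hV i)) hH)
  have hV_pos : ∀ i, 0 < V i := fun i => zero_lt_one.trans_le (hV i)
  choose T hTS hT_card hT using fun i => hK.exists_finset_modularBall_near (hΦ i) hH
    (hV_pos i).le (show 0 < ε i / 4 by linarith [hε i])
  have hbudget : ∑ p : Σ i, T i, 2 * Real.exp (-(m * (ε p.1 / 2) ^ 2 /
      (4 * (V p.1 * Φ p.1 (R p.1))))) < 1 := by
    rw [Fintype.sum_sigma]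
    simp only [Finset.sum_const, Finset.card_univ, Fintype.card_coe, nsmul_eq_mul]
    refine sum_card_mul_exp_lt_one hT_card fun i => ?_
    have hΦRi := hΦR i
    have hVi := hV_pos i
    have hεi := hε i
    rw [le_div_iff₀ (by positivity)]
    have hmi := mul_le_mul_of_nonneg_right (hm i) (show 0 ≤ (ε i / 2) ^ 2 by positivity)
    refine le_trans (le_of_eq ?_) hmi
    simp only [netSampleSize, R]
    field_simp
    ring
  obtain ⟨x, hx⟩ := _root_.exists_forall_abs_samplingError_le (μ := μ) (m := m)
    (Z := fun p : Σ i, T i => frameModular (Φ p.1) K p.2)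
    (v := fun p => V p.1 * Φ p.1 (R p.1)) (u := fun p => ε p.1 / 2)
    (fun p => hK.measurable_frameModular (hΦ p.1).toIsPhiPrefun p.2)
    (fun p => mul_pos (hV_pos _) (hΦR _)) (fun p => by linarith [hε p.1])
    (fun p => by linarith [hε4 p.1])
    (fun p y => by
      rw [abs_of_nonneg (show 0 ≤ frameModular _ _ _ _ from (hΦ p.1).nonneg _ (abs_nonneg _))]
      exact (hK.frameModular_le (hΦ p.1) (hTS p.1 p.2.2) y).trans
        (le_mul_of_one_le_left (hΦR p.1).le (hV p.1)))
    (fun p => hK.integral_frameModular_sq_le (hΦ p.1) (hTS p.1 p.2.2)) hbudget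
  refine ⟨x, fun i e he => ?_⟩
  obtain ⟨g, hg, heg⟩ := hT i e he
  exact (hK.abs_samplingError_le_of_near (hΦ i).toIsPhiPrefun (hx ⟨i, g, hg⟩) heg).trans_eq
    (by ring)

end IsParsevalFrame

end FrameSampling

section FrameChaining

open scoped RealInnerProductSpace

theorem one_le_log_four_mul_card {Y : Type*} [Fintype Y] [Nonempty Y] :
    1 ≤ Real.log (4 * Fintype.card Y) := by
  have hcard : (1 : ℝ) ≤ Fintype.card Y := by exact_mod_cast Fintype.card_pos
  rw [Real.le_log_iff_exp_le (by positivity)]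
  linarith [Real.exp_one_lt_d9]

variable {Y E : Type*} [Fintype Y] [MeasurableSpace Y] [NormedAddCommGroup E]
  [InnerProductSpace ℝ E] [FiniteDimensional ℝ E] {μ : Measure Y} [IsProbabilityMeasure μ]
  {K : Y → E} {H V a q ε : ℝ} {Φ : ℝ → ℝ} {m k₀ : ℕ}

/-- The number of points for which chaining discretizes a modular on a frame of dimension at most
`2 ^ (k₀ + 1)` over `exp Λ / 4` points. -/
noncomputable def chainSampleSize (Φ : ℝ → ℝ) (a q H V ε : ℝ) (k₀ : ℕ) (Λ : ℝ) : ℝ :=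
  70000 * (V * (q * a * Φ (modularRadius Φ a H V))) * ε⁻¹ ^ 2 * (k₀ + 1) ^ 2 * Λ

namespace IsParsevalFrame

theorem exists_net (hK : IsParsevalFrame μ K H) (hH : 0 < H) {A : ℝ} (hA : 0 < A) {S : Set E}
    (h0 : 0 ∈ S) (hS : ∀ f ∈ S, ∫ y, |⟪K y, f⟫| ∂μ ≤ A) (k : ℕ) :
    ∃ T : Finset E, ↑T ⊆ S ∧
      (T.card : ℝ) ≤ Real.exp (min (66 * 2 ^ k * Real.log (4 * Fintype.card Y))
        (Module.finrank ℝ E * (k + 2))) ∧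
      (k = 0 → ∀ g ∈ T, g = 0) ∧ ∀ f ∈ S, ∃ g ∈ T, f - g ∈ slab K (A * H ^ 2 / 2 ^ k) := by
  have : Nonempty Y := nonempty_of_isProbabilityMeasure μ
  rcases Nat.eq_zero_or_pos k with rfl | hk
  · have hlog := one_le_log_four_mul_card (Y := Y)
    refine ⟨{0}, by simpa using h0, ?_, by simp, fun f hf => ⟨0, by simp, fun y => ?_⟩⟩
    · rw [Finset.card_singleton, Nat.cast_one]
      exact Real.one_le_exp (by positivity)
    · simpa using hK.abs_inner_le_of_integral_abs_le (hS f hf) y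
  rcases le_total (66 * 2 ^ k * Real.log (4 * Fintype.card Y))
    (Module.finrank ℝ E * (k + 2) : ℝ) with h | h
  · obtain ⟨T, hTS, hT_card, hT⟩ := hK.exists_coarse_net hH hA hS k
    exact ⟨T, hTS, by rwa [min_eq_left h], fun h0 => absurd h0 hk.ne', hT⟩
  · obtain ⟨T, hTS, hT_card, hT⟩ := hK.exists_fine_net hH hA hS k
    exact ⟨T, hTS, by rwa [min_eq_right h], fun h0 => absurd h0 hk.ne', hT⟩

theorem exists_isChainingNet (hK : IsParsevalFrame μ K H) (hΦ : IsWeakPhi Φ a q) (hH : 0 < H)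
    (hV : 0 ≤ V) :
    ∃ T : ℕ → Finset (Y → ℝ),
      IsChainingNet (frameModular Φ K '' modularBall Φ μ K V)
        (q * a * Φ (modularRadius Φ a H V)) T ∧
      ∀ k, ((T k).card : ℝ) ≤ Real.exp (min (66 * 2 ^ k * Real.log (4 * Fintype.card Y))
        (Module.finrank ℝ E * (k + 2))) := by
  classical
  have hR := modularRadius_pos hΦ hV hH
  have ha := hΦ.one_le_a
  have hΦ1 := hΦ.pos one_pos
  choose T hTS hT_card hT_zero hT using hK.exists_net hH (A := 1 + a / Φ 1 * V) (by positivity)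
    (zero_mem_modularBall hΦ.toIsPhiPrefun hV) (fun e he => hK.integral_abs_inner_le hΦ he)
  refine ⟨fun k => (T k).image (frameModular Φ K), ⟨fun k => ?_, ?_, ?_⟩, fun k =>
    (Nat.cast_le.2 Finset.card_image_le).trans (hT_card k)⟩
  · rw [Finset.coe_image]
    exact Set.image_mono (hTS k)
  · simp only [Finset.mem_image]
    rintro _ ⟨e, he, rfl⟩
    rw [hT_zero 0 rfl e he]
    ext y
    simp [frameModular, hΦ.map_zero]
  · rintro k _ ⟨e, he, rfl⟩
    obtain ⟨g, hg, heg⟩ := hT k e he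
    exact ⟨_, Finset.mem_image_of_mem _ hg,
      hK.abs_frameModular_sub_le hΦ hR he (hTS k hg) (by positivity) heg⟩

theorem exists_forall_modularBall_abs_samplingError_le (hK : IsParsevalFrame μ K H)
    (hΦ : IsWeakPhi Φ a q) (hH : 0 < H) (hV : 1 ≤ V) (hε : 0 < ε) (hε2 : ε ≤ 2)
    (hk₀ : (Module.finrank ℝ E : ℝ) ≤ 2 * 2 ^ k₀)
    (hm : chainSampleSize Φ a q H V ε k₀ (Real.log (4 * Fintype.card Y)) ≤ m) :
    ∃ x : Fin m → Y, ∀ e ∈ modularBall Φ μ K V,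
      |samplingError μ x (frameModular Φ K e)| ≤ ε := by
  have : Nonempty Y := nonempty_of_isProbabilityMeasure μ
  have hV_pos : 0 < V := one_pos.trans_le hV
  have hΦR := hΦ.pos (modularRadius_pos hΦ hV_pos.le hH)
  have ha := hΦ.one_le_a
  have hq := hΦ.one_le_q
  obtain ⟨T, hT, hT_card⟩ := hK.exists_isChainingNet hΦ hH hV_pos.le
  set L := q * a * Φ (modularRadius Φ a H V)
  have hL : 0 < L := by positivity
  obtain ⟨n, hn⟩ := pow_unbounded_of_one_lt (8 * L / ε) one_lt_two
  obtain ⟨x, hx⟩ := hT.exists_forall_abs_samplingError_le (μ := μ) (m := m) hL hV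
    (by rintro _ ⟨e, -, rfl⟩; exact hK.measurable_frameModular hΦ.toIsPhiPrefun e)
    (by rintro _ ⟨e, -, rfl⟩ y; exact hΦ.nonneg _ (abs_nonneg _))
    (by rintro _ ⟨e, he, rfl⟩; exact he) hT_card (chainWeight_nonneg hε.le)
    (fun k => (chainWeight_le_self hε.le k).trans hε2)
    (entropy_le_mul_chainWeight_sq hε (mul_pos hV_pos hL) one_le_log_four_mul_card hm hk₀
      (fun k => min_le_left _ _) fun k => min_le_right _ _) (k₀ + n)
  refine ⟨x, fun e he => (hx _ (Set.mem_image_of_mem _ he)).trans ?_⟩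
  have htail : 2 * L / 2 ^ (k₀ + n) ≤ ε / 4 := by
    have hpow : 8 * L / ε ≤ 2 ^ (k₀ + n) :=
      hn.le.trans (pow_le_pow_right₀ one_le_two (Nat.le_add_left n k₀))
    rw [div_le_iff₀ hε] at hpow
    rw [div_le_iff₀ (by positivity)]
    linarith
  linarith [sum_chainWeight_le (k₀ := k₀) hε.le n]

end IsParsevalFrame

end FrameChaining

section UniformMeasure

/-- The uniform probability measure on `m` points. -/
noncomputable abbrev uniformMeasure (m : ℕ) [NeZero m] : Measure (Fin m) :=
  (PMF.uniformOfFintype (Fin m)).toMeasure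

variable {m M : ℕ} [NeZero M]

theorem integral_uniformMeasure (g : Fin M → ℝ) :
    ∫ j, g j ∂uniformMeasure M = (∑ j, g j) / M := by
  rw [PMF.integral_eq_sum, Finset.sum_div]
  simp [div_eq_inv_mul]

theorem samplingError_comp {Y : Type*} [MeasurableSpace Y] (μ : Measure Y) (y : Fin M → Y)
    (z : Fin m → Fin M) (g : Y → ℝ) :
    samplingError μ (y ∘ z) g =
      samplingError (uniformMeasure M) z (g ∘ y) + samplingError μ y g := by
  simp only [samplingError, integral_uniformMeasure, Function.comp_apply]
  ring

end UniformMeasure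

section TwoStage

open scoped RealInnerProductSpace

variable {Y E : Type*} [MeasurableSpace Y] [NormedAddCommGroup E] [InnerProductSpace ℝ E]
  {μ : Measure Y} {K : Y → E} {H V a q ε : ℝ}
  {Φ : ℝ → ℝ} {m M k₀ : ℕ}

theorem netSampleSize_pos (hΦ : IsWeakPhi Φ a q) (hH : 0 < H) (hV : 0 < V) (hε : 0 < ε) (n : ℕ) :
    0 < netSampleSize Φ a q H V ε n := by
  have hΦR := hΦ.pos (modularRadius_pos hΦ hV.le hH)
  have ha := hΦ.one_le_a
  have hq := hΦ.one_le_q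
  unfold netSampleSize
  positivity

namespace IsParsevalFrame

theorem mul_norm_sq_le_of_abs_samplingError_le (hK : IsParsevalFrame μ K H) {y : Fin M → Y}
    (hy : ∀ e ∈ modularBall (fun t => t ^ 2) μ K 1,
      |samplingError μ y (frameModular (fun t => t ^ 2) K e)| ≤ ε) (e : E) :
    (1 - ε) * ‖e‖ ^ 2 ≤ (∑ j, ⟪K (y j), e⟫ ^ 2) / M := by
  rcases eq_or_ne e 0 with rfl | he
  · simp
  have hnorm : 0 < ‖e‖ := norm_pos_iff.2 he
  have hint : ∫ y, frameModular (fun t => t ^ 2) K (‖e‖⁻¹ • e) y ∂μ = 1 := by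
    simp only [frameModular, sq_abs, hK.integral_inner_sq, norm_smul, norm_inv, norm_norm,
      inv_mul_cancel₀ hnorm.ne', one_pow]
  have hlower := (abs_le.1 (hy (‖e‖⁻¹ • e) hint.le)).1
  simp only [samplingError, hint] at hlower
  simp only [frameModular, sq_abs, inner_smul_right, mul_pow, ← Finset.mul_sum] at hlower
  have hscale := mul_le_mul_of_nonneg_right hlower (sq_nonneg ‖e‖)
  have hcancel : (‖e‖⁻¹ ^ 2 * ∑ j, ⟪K (y j), e⟫ ^ 2) / M * ‖e‖ ^ 2 =
      (∑ j, ⟪K (y j), e⟫ ^ 2) / M := by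
    field_simp
  linarith

variable [FiniteDimensional ℝ E]

theorem exists_isParsevalFrame_sample [NeZero M] (hK : IsParsevalFrame μ K H) {y : Fin M → Y}
    (hH : 0 < H) (hy : ∀ e : E, 1 / 2 * ‖e‖ ^ 2 ≤ (∑ j, ⟪K (y j), e⟫ ^ 2) / M) :
    ∃ (E' : Submodule ℝ (Lp ℝ 2 (uniformMeasure M))) (K' : Fin M → E') (r : E →ₗ[ℝ] E'),
      FiniteDimensional ℝ E' ∧ IsParsevalFrame (uniformMeasure M) K' (√2 * H) ∧
      (∀ j e, ⟪K' j, r e⟫ = ⟪K (y j), e⟫) ∧ Module.finrank ℝ E' ≤ Module.finrank ℝ E := by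
  let T : E →ₗ[ℝ] Fin M → ℝ := LinearMap.pi fun j => innerₗ E (K (y j))
  refine exists_isParsevalFrame (μ := uniformMeasure M) (by positivity) T
    (fun e => measurable_of_finite _) fun e j => ?_
  have hnorm : ‖e‖ ≤ √2 * √(∫ i, T e i ^ 2 ∂uniformMeasure M) := by
    rw [← Real.sqrt_mul zero_le_two]
    refine Real.le_sqrt_of_sq_le ?_
    rw [integral_uniformMeasure]
    have := hy e
    simp only [T, LinearMap.pi_apply, innerₗ_apply_apply]
    linarith
  calc |T e j| ≤ H * ‖e‖ := hK.abs_inner_le (y j) e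
    _ ≤ H * (√2 * √(∫ i, T e i ^ 2 ∂uniformMeasure M)) := by gcongr
    _ = √2 * H * √(∫ i, T e i ^ 2 ∂uniformMeasure M) := by ring

variable [IsProbabilityMeasure μ]

theorem exists_sample_modular_and_sq (hK : IsParsevalFrame μ K H) (hΦ : IsWeakPhi Φ a q)
    (hH : 0 < H) (hV : 1 ≤ V) (hε : 0 < ε) (hε4 : ε ≤ 4) (hM : netSampleSize Φ a q H V ε 2 ≤ M)
    (hM_sq : netSampleSize (fun t => t ^ 2) 1 2 H 1 ε 2 ≤ M) :
    ∃ y : Fin M → Y,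
      (∀ e ∈ modularBall Φ μ K V, |samplingError μ y (frameModular Φ K e)| ≤ ε) ∧
      ∀ e : E, (1 - ε) * ‖e‖ ^ 2 ≤ (∑ j, ⟪K (y j), e⟫ ^ 2) / M := by
  obtain ⟨y, hy⟩ := hK.exists_forall_family_abs_samplingError_le (m := M)
    (Φ := fun b => bif b then Φ else fun t => t ^ 2) (a := fun b => bif b then a else 1)
    (q := fun b => bif b then q else 2) (V := fun b => bif b then V else 1) (ε := fun _ => ε)
    (Bool.forall_bool.2 ⟨IsWeakPhi.pow_two, hΦ⟩) hH (Bool.forall_bool.2 ⟨le_rfl, hV⟩)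
    (fun _ => hε) (fun _ => hε4) (Bool.forall_bool.2 ⟨hM_sq, hM⟩)
  exact ⟨y, hy true, hK.mul_norm_sq_le_of_abs_samplingError_le (hy false)⟩

theorem exists_forall_modularBall_abs_samplingError_le_two_mul (hK : IsParsevalFrame μ K H)
    (hΦ : IsWeakPhi Φ a q) (hH : 0 < H) (hV : 1 ≤ V) (hε : 0 < ε) (hε2 : ε ≤ 1 / 2)
    (hM : netSampleSize Φ a q H V ε 2 ≤ M)
    (hM_sq : netSampleSize (fun t => t ^ 2) 1 2 H 1 ε 2 ≤ M)
    (hk₀ : (Module.finrank ℝ E : ℝ) ≤ 2 * 2 ^ k₀)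
    (hm : chainSampleSize Φ a q (√2 * H) (V + 1) ε k₀ (Real.log (4 * M)) ≤ m) :
    ∃ x : Fin m → Y, ∀ e ∈ modularBall Φ μ K V,
      |samplingError μ x (frameModular Φ K e)| ≤ 2 * ε := by
  have hM_pos : (0 : ℝ) < M := (netSampleSize_pos hΦ hH (by positivity) hε 2).trans_le hM
  have : NeZero M := ⟨by rintro rfl; simp at hM_pos⟩
  obtain ⟨y, hy_mod, hy_sq⟩ := hK.exists_sample_modular_and_sq hΦ hH hV hε (by linarith) hM hM_sq
  obtain ⟨E', K', r, _, hK', hr, hfinrank⟩ := hK.exists_isParsevalFrame_sample (y := y) hH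
    fun e => (mul_le_mul_of_nonneg_right (by linarith) (sq_nonneg _)).trans (hy_sq e)
  have hcomp : ∀ e, frameModular Φ K e ∘ y = frameModular Φ K' (r e) := fun e => by
    ext j
    simp only [Function.comp_apply, frameModular, hr]
  obtain ⟨z, hz⟩ := hK'.exists_forall_modularBall_abs_samplingError_le (m := m) hΦ
    (by positivity) (V := V + 1) (by linarith) hε (by linarith)
    ((Nat.cast_le.2 hfinrank).trans hk₀) (by rwa [Fintype.card_fin])
  refine ⟨y ∘ z, fun e he => ?_⟩
  have herr := abs_le.1 (hy_mod e he)
  have hre : r e ∈ modularBall Φ (uniformMeasure M) K' (V + 1) := by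
    have hV' : ∫ y, frameModular Φ K e y ∂μ ≤ V := he
    change ∫ j, frameModular Φ K' (r e) j ∂uniformMeasure M ≤ V + 1
    rw [← hcomp, integral_uniformMeasure]
    simp only [samplingError] at herr
    simp only [Function.comp_apply]
    linarith
  rw [samplingError_comp, hcomp]
  linarith [abs_add_le (samplingError (uniformMeasure M) z (frameModular Φ K' (r e)))
    (samplingError μ y (frameModular Φ K e)), hz _ hre, hy_mod e he]

end IsParsevalFrame

end TwoStage

section SampleSizes

open Real

variable {Φ : ℝ → ℝ} {a q V : ℝ}

theorem log_le_logb_two {x : ℝ} (hx : 1 ≤ x) : log x ≤ logb 2 x := by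
  rw [logb, le_div_iff₀ (log_pos one_lt_two)]
  exact mul_le_of_le_one_right (log_nonneg hx) (by linarith [log_two_lt_d9])

theorem one_le_logb_two {x : ℝ} (hx : 2 ≤ x) : 1 ≤ logb 2 x := by
  rw [le_logb_iff_rpow_le one_lt_two (by positivity)]
  simpa using hx

theorem natLog_two_add_one_le_logb {N : ℕ} (hN : 1 ≤ N) :
    (Nat.log 2 N : ℝ) + 1 ≤ logb 2 (2 * N) := by
  rw [logb_mul two_ne_zero (by positivity), logb_self_eq_one one_lt_two]
  have := natLog_le_logb N 2
  push_cast at this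
  linarith

/-- The growth rate, up to a constant depending on `Φ`, of the number of sampling points. -/
noncomputable def samplingRate (Φ : ℝ → ℝ) (N : ℕ) (H ε : ℝ) : ℝ :=
  ε⁻¹ ^ 2 * logb 2 ε⁻¹ * Φ (H ^ 2) * logb 2 (2 * N) ^ 2 * logb 2 (2 * H ^ 2)

theorem two_le_inv {ε : ℝ} (hε : 0 < ε) (hε2 : ε ≤ 1 / 2) : 2 ≤ ε⁻¹ := by
  rw [le_inv_comm₀ two_pos hε]
  linarith

namespace IsWeakPhi

theorem apply_modularRadius_le (hΦ : IsWeakPhi Φ a q) (hV : 0 ≤ V) (H : ℝ) :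
    Φ (modularRadius Φ a H V) ≤ (1 + a / Φ 1 * V) ^ q * Φ (H ^ 2) := by
  have ha := hΦ.one_le_a
  have hΦ1 := hΦ.pos one_pos
  exact hΦ.apply_mul_le (le_add_of_nonneg_right (by positivity)) (sq_nonneg H)

theorem apply_le_mul_pow (hΦ : IsWeakPhi Φ a q) {t : ℝ} (ht : 1 ≤ t) :
    Φ t ≤ Φ 1 * t ^ ⌈q⌉₊ := by
  have hΦ1 := hΦ.pos one_pos
  calc Φ t = Φ (t * 1) := by rw [mul_one]
    _ ≤ t ^ q * Φ 1 := hΦ.apply_mul_le ht zero_le_one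
    _ ≤ t ^ (⌈q⌉₊ : ℝ) * Φ 1 := by
        gcongr
        exact Nat.le_ceil q
    _ = Φ 1 * t ^ ⌈q⌉₊ := by rw [rpow_natCast, mul_comm]

theorem exists_netSampleSize_le_pow (hΦ : IsWeakPhi Φ a q) (hV : 0 ≤ V) (n : ℕ) :
    ∃ (C : ℝ) (k : ℕ), 0 ≤ C ∧ ∀ H ε : ℝ, 1 ≤ H → 0 < ε → ε ≤ 1 →
      netSampleSize Φ a q H V ε n ≤ C * (H ^ 2 * ε⁻¹) ^ k := by
  have ha := hΦ.one_le_a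
  have hq := hΦ.one_le_q
  have hΦ1 := hΦ.pos one_pos
  set c := (1 + a / Φ 1 * V) ^ q * Φ 1
  refine ⟨16 * V * c * (4 * (q * a * c) + 3 + 2 * n), 2 * ⌈q⌉₊ + 4, by positivity,
    fun H ε hH hε hε1 => ?_⟩
  have hH2 : 1 ≤ H ^ 2 := one_le_pow₀ hH
  have hε_inv : 1 ≤ ε⁻¹ := (one_le_inv₀ hε).2 hε1
  set w := H ^ 2 * ε⁻¹
  have hHw : H ^ 2 ≤ w := le_mul_of_one_le_right (by positivity) hε_inv
  have hεw : ε⁻¹ ≤ w := le_mul_of_one_le_left (by positivity) hH2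
  have hw : 1 ≤ w := hH2.trans hHw
  have hR : Φ (modularRadius Φ a H V) ≤ c * w ^ ⌈q⌉₊ :=
    calc Φ (modularRadius Φ a H V) ≤ (1 + a / Φ 1 * V) ^ q * (Φ 1 * (H ^ 2) ^ ⌈q⌉₊) :=
          (hΦ.apply_modularRadius_le hV H).trans
            (mul_le_mul_of_nonneg_left (hΦ.apply_le_mul_pow hH2) (by positivity))
      _ = c * (H ^ 2) ^ ⌈q⌉₊ := (mul_assoc _ _ _).symm
      _ ≤ c * w ^ ⌈q⌉₊ := by gcongr
  have hΦR : 0 ≤ Φ (modularRadius Φ a H V) := hΦ.nonneg _ (by unfold modularRadius; positivity)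
  have hpow : w ≤ w ^ (⌈q⌉₊ + 2) := le_self_pow₀ hw (by lia)
  have hpow_one : 1 ≤ w ^ (⌈q⌉₊ + 2) := one_le_pow₀ hw
  calc netSampleSize Φ a q H V ε n
      ≤ 16 * V * (c * w ^ ⌈q⌉₊) * w ^ 2 *
          (w * (4 * (q * a * (c * w ^ ⌈q⌉₊)) * w + 3) + 2 * n) := by
        rw [netSampleSize, div_eq_mul_inv]
        gcongr
    _ = 16 * V * c * w ^ (⌈q⌉₊ + 2) *
          (4 * (q * a * c) * w ^ (⌈q⌉₊ + 2) + 3 * w + 2 * n * 1) := by ring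
    _ ≤ 16 * V * c * w ^ (⌈q⌉₊ + 2) * (4 * (q * a * c) * w ^ (⌈q⌉₊ + 2) +
          3 * w ^ (⌈q⌉₊ + 2) + 2 * n * w ^ (⌈q⌉₊ + 2)) := by gcongr
    _ = 16 * V * c * (4 * (q * a * c) + 3 + 2 * n) * w ^ (2 * ⌈q⌉₊ + 4) := by ring

theorem exists_nat_netSampleSize_le (hΦ : IsWeakPhi Φ a q) (hV : 0 < V) :
    ∃ (C : ℝ) (k : ℕ), 1 ≤ C ∧ ∀ H ε : ℝ, 1 ≤ H → 0 < ε → ε ≤ 1 → ∃ M : ℕ,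
      netSampleSize Φ a q H V ε 2 ≤ M ∧ netSampleSize (fun t => t ^ 2) 1 2 H 1 ε 2 ≤ M ∧
      4 * M ≤ C * (H ^ 2 * ε⁻¹) ^ k := by
  obtain ⟨C₁, k₁, hC₁, hle₁⟩ := hΦ.exists_netSampleSize_le_pow hV.le 2
  obtain ⟨C₂, k₂, hC₂, hle₂⟩ := IsWeakPhi.pow_two.exists_netSampleSize_le_pow zero_le_one 2
  refine ⟨4 * (C₁ + C₂ + 1), k₁ + k₂, by linarith, fun H ε hH hε hε1 => ?_⟩
  have hH_pos : 0 < H := one_pos.trans_le hH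
  have hpos₁ := netSampleSize_pos hΦ hH_pos hV hε 2
  have hpos₂ := netSampleSize_pos IsWeakPhi.pow_two hH_pos one_pos hε 2
  set S₁ := netSampleSize Φ a q H V ε 2
  set S₂ := netSampleSize (fun t => t ^ 2) 1 2 H 1 ε 2
  have hM_le : S₁ + S₂ ≤ ⌈S₁ + S₂⌉₊ := Nat.le_ceil _
  refine ⟨⌈S₁ + S₂⌉₊, by linarith, by linarith, ?_⟩
  set w := H ^ 2 * ε⁻¹
  have hw : 1 ≤ w := one_le_mul_of_one_le_of_one_le (one_le_pow₀ hH) ((one_le_inv₀ hε).2 hε1)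
  have hM_lt : ⌈S₁ + S₂⌉₊ < S₁ + S₂ + 1 := Nat.ceil_lt_add_one (by positivity)
  calc (4 : ℝ) * ⌈S₁ + S₂⌉₊ ≤ 4 * (C₁ * w ^ k₁ + C₂ * w ^ k₂ + 1) := by
        linarith [hle₁ H ε hH hε hε1, hle₂ H ε hH hε hε1]
    _ ≤ 4 * (C₁ * w ^ (k₁ + k₂) + C₂ * w ^ (k₁ + k₂) + w ^ (k₁ + k₂)) := by
        gcongr
        exacts [Nat.le_add_right _ _, Nat.le_add_left _ _, one_le_pow₀ hw]
    _ = 4 * (C₁ + C₂ + 1) * w ^ (k₁ + k₂) := by ring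

theorem exists_chainSampleSize_le (hΦ : IsWeakPhi Φ a q) (hV : 0 < V) :
    ∃ C : ℝ, 0 < C ∧ ∀ (N : ℕ) (H ε Λ : ℝ), 1 ≤ N → 0 ≤ Λ →
      chainSampleSize Φ a q (√2 * H) V ε (Nat.log 2 N) Λ ≤
        C * (ε⁻¹ ^ 2 * Φ (H ^ 2) * logb 2 (2 * N) ^ 2 * Λ) := by
  have ha := hΦ.one_le_a
  have hq := hΦ.one_le_q
  have hΦ1 := hΦ.pos one_pos
  refine ⟨70000 * (V * (q * a * ((1 + a / Φ 1 * V) ^ q * 2 ^ q))), by positivity,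
    fun N H ε Λ hN hΛ => ?_⟩
  have hR : Φ (modularRadius Φ a (√2 * H) V) ≤ (1 + a / Φ 1 * V) ^ q * 2 ^ q * Φ (H ^ 2) :=
    calc Φ (modularRadius Φ a (√2 * H) V) ≤ (1 + a / Φ 1 * V) ^ q * Φ ((√2 * H) ^ 2) :=
          hΦ.apply_modularRadius_le hV.le _
      _ ≤ (1 + a / Φ 1 * V) ^ q * (2 ^ q * Φ (H ^ 2)) := by
          rw [mul_pow, sq_sqrt zero_le_two]
          exact mul_le_mul_of_nonneg_left (hΦ.apply_mul_le one_le_two (sq_nonneg H))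
            (by positivity)
      _ = (1 + a / Φ 1 * V) ^ q * 2 ^ q * Φ (H ^ 2) := (mul_assoc _ _ _).symm
  have hΦH : 0 ≤ Φ (H ^ 2) := hΦ.nonneg _ (sq_nonneg H)
  calc chainSampleSize Φ a q (√2 * H) V ε (Nat.log 2 N) Λ
      ≤ 70000 * (V * (q * a * ((1 + a / Φ 1 * V) ^ q * 2 ^ q * Φ (H ^ 2)))) * ε⁻¹ ^ 2 *
          logb 2 (2 * N) ^ 2 * Λ := by
        rw [chainSampleSize]
        gcongr
        exact natLog_two_add_one_le_logb hN
    _ = _ := by ring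

end IsWeakPhi

theorem log_le_mul_logb_mul_logb {C H ε x : ℝ} {k : ℕ} (hC : 1 ≤ C) (hH : 1 ≤ H) (hε : 0 < ε)
    (hε2 : ε ≤ 1 / 2) (hx : 0 < x) (hxC : x ≤ C * (H ^ 2 * ε⁻¹) ^ k) :
    log x ≤ (log C + 2 * k) * (logb 2 ε⁻¹ * logb 2 (2 * H ^ 2)) := by
  have hH2 : 1 ≤ H ^ 2 := one_le_pow₀ hH
  have hε_inv := two_le_inv hε hε2
  have hlogC := log_nonneg hC
  have hε1 := one_le_logb_two hε_inv
  have hH1 := one_le_logb_two (x := 2 * H ^ 2) (by linarith)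
  have hεlog : log ε⁻¹ ≤ logb 2 ε⁻¹ := log_le_logb_two (by linarith)
  have hHlog : log (H ^ 2) ≤ logb 2 (2 * H ^ 2) :=
    (log_le_log (by positivity) (by linarith)).trans (log_le_logb_two (by linarith))
  set P := logb 2 ε⁻¹ * logb 2 (2 * H ^ 2)
  have hP : 1 ≤ P := one_le_mul_of_one_le_of_one_le hε1 hH1
  have hεP : logb 2 ε⁻¹ ≤ P := le_mul_of_one_le_right (by linarith) hH1
  have hHP : logb 2 (2 * H ^ 2) ≤ P := le_mul_of_one_le_left (by linarith) hε1
  calc log x ≤ log (C * (H ^ 2 * ε⁻¹) ^ k) := log_le_log hx hxC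
    _ = log C * 1 + k * (log (H ^ 2) + log ε⁻¹) := by
        rw [log_mul (by positivity) (by positivity), log_pow,
          log_mul (by positivity) (by positivity), mul_one]
    _ ≤ log C * P + k * (P + P) := by
        gcongr
        exacts [hHlog.trans hHP, hεlog.trans hεP]
    _ = (log C + 2 * k) * P := by ring

namespace IsWeakPhi

theorem apply_one_le_samplingRate (hΦ : IsWeakPhi Φ a q) {N : ℕ} {H ε : ℝ} (hN : 1 ≤ N)
    (hH : 1 ≤ H) (hε : 0 < ε) (hε2 : ε ≤ 1 / 2) : Φ 1 ≤ samplingRate Φ N H ε := by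
  have hH2 : 1 ≤ H ^ 2 := one_le_pow₀ hH
  have hε_inv := two_le_inv hε hε2
  have hN' : (1 : ℝ) ≤ N := by exact_mod_cast hN
  have hlogN : 1 ≤ logb 2 (2 * N) := one_le_logb_two (by linarith)
  have hΦH : Φ 1 ≤ Φ (H ^ 2) := hΦ.le_of_le zero_le_one hH2
  have hΦH_pos := (hΦ.pos one_pos).trans_le hΦH
  have hε_factor : 1 ≤ ε⁻¹ ^ 2 * logb 2 ε⁻¹ :=
    one_le_mul_of_one_le_of_one_le (one_le_pow₀ (by linarith)) (one_le_logb_two hε_inv)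
  have hlog_factor : 1 ≤ logb 2 (2 * N) ^ 2 * logb 2 (2 * H ^ 2) :=
    one_le_mul_of_one_le_of_one_le (one_le_pow₀ hlogN) (one_le_logb_two (by linarith))
  calc Φ 1 ≤ Φ (H ^ 2) := hΦH
    _ ≤ ε⁻¹ ^ 2 * logb 2 ε⁻¹ * Φ (H ^ 2) := le_mul_of_one_le_left hΦH_pos.le hε_factor
    _ ≤ ε⁻¹ ^ 2 * logb 2 ε⁻¹ * Φ (H ^ 2) * (logb 2 (2 * N) ^ 2 * logb 2 (2 * H ^ 2)) :=
        le_mul_of_one_le_right (by positivity) hlog_factor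
    _ = samplingRate Φ N H ε := (mul_assoc _ _ _).symm

theorem samplingRate_div_four_le (hΦ : IsWeakPhi Φ a q) {N : ℕ} {H ε : ℝ} (hH : 1 ≤ H)
    (hε : 0 < ε) (hε2 : ε ≤ 1 / 2) :
    samplingRate Φ N H (ε / 4) ≤ 48 * samplingRate Φ N H ε := by
  have hε1 := one_le_logb_two (two_le_inv hε hε2)
  have hlog : logb 2 (ε / 4)⁻¹ ≤ 3 * logb 2 ε⁻¹ := by
    have hfour : logb 2 4 = 2 := by
      rw [show (4 : ℝ) = 2 ^ (2 : ℝ) by norm_num, logb_rpow two_pos (by norm_num)]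
    rw [inv_div, div_eq_mul_inv, logb_mul four_ne_zero (by positivity), hfour]
    linarith
  have hH1 := one_le_logb_two (x := 2 * H ^ 2) (by linarith [one_le_pow₀ hH (n := 2)])
  have hΦH := hΦ.nonneg _ (sq_nonneg H)
  calc samplingRate Φ N H (ε / 4)
      ≤ (4 * ε⁻¹) ^ 2 * (3 * logb 2 ε⁻¹) * Φ (H ^ 2) * logb 2 (2 * N) ^ 2 *
          logb 2 (2 * H ^ 2) := by
        rw [samplingRate, show (ε / 4)⁻¹ ^ 2 = (4 * ε⁻¹) ^ 2 by field_simp]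
        gcongr
    _ = 48 * samplingRate Φ N H ε := by
        rw [samplingRate]
        ring

theorem exists_chainSampleSize_le_samplingRate (hΦ : IsWeakPhi Φ a q) (hV : 0 < V) {C₁ : ℝ}
    (hC₁ : 1 ≤ C₁) (k : ℕ) :
    ∃ C : ℝ, 0 ≤ C ∧ ∀ (N : ℕ) (H ε x : ℝ), 1 ≤ N → 1 ≤ H → 0 < ε → ε ≤ 1 / 2 → 1 ≤ x →
      x ≤ C₁ * (H ^ 2 * ε⁻¹) ^ k →
      chainSampleSize Φ a q (√2 * H) V ε (Nat.log 2 N) (log x) ≤ C * samplingRate Φ N H ε := by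
  obtain ⟨C₂, hC₂, hchain⟩ := hΦ.exists_chainSampleSize_le hV
  have hlogC₁ := log_nonneg hC₁
  refine ⟨C₂ * (log C₁ + 2 * k), by positivity, fun N H ε x hN hH hε hε2 hx hxC => ?_⟩
  have hΦH := hΦ.nonneg _ (sq_nonneg H)
  calc chainSampleSize Φ a q (√2 * H) V ε (Nat.log 2 N) (log x)
      ≤ C₂ * (ε⁻¹ ^ 2 * Φ (H ^ 2) * logb 2 (2 * N) ^ 2 * log x) :=
        hchain N H ε _ hN (log_nonneg hx)
    _ ≤ C₂ * (ε⁻¹ ^ 2 * Φ (H ^ 2) * logb 2 (2 * N) ^ 2 *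
          ((log C₁ + 2 * k) * (logb 2 ε⁻¹ * logb 2 (2 * H ^ 2)))) := by
        gcongr
        exact log_le_mul_logb_mul_logb hC₁ hH hε hε2 (by positivity) hxC
    _ = C₂ * (log C₁ + 2 * k) * samplingRate Φ N H ε := by
        rw [samplingRate]
        ring

theorem exists_sampleSizes_le_samplingRate (hΦ : IsWeakPhi Φ a q) (hV : 0 < V) :
    ∃ C : ℝ, 0 < C ∧ ∀ (N : ℕ) (H ε : ℝ), 1 ≤ N → 1 ≤ H → 0 < ε → ε ≤ 1 / 2 →
      ∃ M m : ℕ, 0 < m ∧ m ≤ C * samplingRate Φ N H ε ∧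
        netSampleSize Φ a q H V ε 2 ≤ M ∧ netSampleSize (fun t => t ^ 2) 1 2 H 1 ε 2 ≤ M ∧
        chainSampleSize Φ a q (√2 * H) (V + 1) ε (Nat.log 2 N) (log (4 * M)) ≤ m := by
  have hΦ1 := hΦ.pos one_pos
  obtain ⟨C₁, k, hC₁, hnet⟩ := hΦ.exists_nat_netSampleSize_le hV
  obtain ⟨C, hC, hchain⟩ :=
    hΦ.exists_chainSampleSize_le_samplingRate (V := V + 1) (by positivity) hC₁ k
  refine ⟨C + 1 / Φ 1, add_pos_of_nonneg_of_pos hC (by positivity),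
    fun N H ε hN hH hε hε2 => ?_⟩
  obtain ⟨M, hM, hM_sq, hMC⟩ := hnet H ε hH hε (by linarith)
  have hM_pos : (0 : ℝ) < M :=
    (netSampleSize_pos hΦ (one_pos.trans_le hH) hV hε 2).trans_le hM
  have hM_one : (1 : ℝ) ≤ M := by exact_mod_cast hM_pos
  have hrate := hΦ.apply_one_le_samplingRate hN hH hε hε2
  set S := samplingRate Φ N H ε
  have hratio : 1 ≤ S / Φ 1 := (one_le_div hΦ1).2 hrate
  have hCS : 0 ≤ C * S := mul_nonneg hC (hΦ1.le.trans hrate)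
  have hsplit : (C + 1 / Φ 1) * S = C * S + S / Φ 1 := by ring
  refine ⟨M, ⌊(C + 1 / Φ 1) * S⌋₊, Nat.floor_pos.2 (by linarith), Nat.floor_le (by linarith),
    hM, hM_sq, ?_⟩
  linarith [hchain N H ε (4 * M) hN hH hε hε2 (by linarith) hMC,
    Nat.lt_floor_add_one ((C + 1 / Φ 1) * S)]

end IsWeakPhi

end SampleSizes

/-! ### Luxemburg functionals -/

/-- The modular `∫ Φ(|f| / l) dμ` at scale `l`, whose values decide the Luxemburg functional. -/
noncomputable def luxModular {Ω : Type*} [MeasurableSpace Ω] (μ : Measure Ω) (Φ : ℝ → ℝ)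
    (f : Ω → ℝ) (l : ℝ) : ℝ :=
  ∫ x, Φ (|f x| / l) ∂μ

section Luxemburg

variable {Ω : Type*} [MeasurableSpace Ω] {μ : Measure Ω} {Φ : ℝ → ℝ} {a q : ℝ} {f : Ω → ℝ}
  {l c : ℝ}

theorem luxNorm_nonneg (μ : Measure Ω) (Φ : ℝ → ℝ) (f : Ω → ℝ) : 0 ≤ luxNorm μ Φ f :=
  Real.sInf_nonneg fun _ hl => hl.1.le

theorem luxNorm_le_of_luxModular_le_one (hl : 0 < l) (h : luxModular μ Φ f l ≤ 1) :
    luxNorm μ Φ f ≤ l :=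
  csInf_le ⟨0, fun _ hs => hs.1.le⟩ ⟨hl, h⟩

theorem one_lt_luxModular_of_lt_luxNorm (hl : 0 < l) (hlt : l < luxNorm μ Φ f) :
    1 < luxModular μ Φ f l :=
  not_le.1 fun h => hlt.not_ge (luxNorm_le_of_luxModular_le_one hl h)

theorem IsPhiPrefun.luxModular_nonneg (hΦ : IsPhiPrefun Φ) (hl : 0 < l) :
    0 ≤ luxModular μ Φ f l :=
  integral_nonneg fun _ => hΦ.nonneg _ (by positivity)

theorem IsPhiPrefun.luxModular_anti (hΦ : IsPhiPrefun Φ)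
    (hf : Integrable (fun x => Φ (|f x| / l)) μ) (hl : 0 < l) {l' : ℝ} (hll' : l ≤ l') :
    luxModular μ Φ f l' ≤ luxModular μ Φ f l := by
  have hl' : 0 < l' := hl.trans_le hll'
  exact integral_mono_of_nonneg (.of_forall fun x => hΦ.nonneg _ (by positivity)) hf
    (.of_forall fun x => hΦ.le_of_le (by positivity) (by gcongr))

namespace IsWeakPhi

theorem luxModular_mul_le (hΦ : IsWeakPhi Φ a q) (hf : Integrable (fun x => Φ (|f x| / l)) μ)
    (hl : 0 < l) (hc : 1 ≤ c) : luxModular μ Φ f (c * l) ≤ a / c * luxModular μ Φ f l := by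
  have hc_pos : 0 < c := one_pos.trans_le hc
  rw [luxModular, luxModular, ← integral_const_mul]
  refine integral_mono_of_nonneg (.of_forall fun x => hΦ.nonneg _ (by positivity))
    (hf.const_mul _) (.of_forall fun x => ?_)
  have hscale : c * (|f x| / (c * l)) = |f x| / l := by
    rw [← mul_div_assoc, mul_div_mul_left _ _ hc_pos.ne']
  simpa only [hscale] using hΦ.le_apply_mul hc (t := |f x| / (c * l)) (by positivity)

theorem luxModular_le_rpow_mul (hΦ : IsWeakPhi Φ a q)
    (hf : ∀ l, 0 < l → Integrable (fun x => Φ (|f x| / l)) μ) (hl : 0 < l) (hc : 1 ≤ c) :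
    luxModular μ Φ f l ≤ c ^ q * luxModular μ Φ f (c * l) := by
  have hc_pos : 0 < c := one_pos.trans_le hc
  rw [luxModular, luxModular, ← integral_const_mul]
  refine integral_mono (hf l hl) ((hf _ (by positivity)).const_mul _) fun x => ?_
  have hscale : c * (|f x| / (c * l)) = |f x| / l := by
    rw [← mul_div_assoc, mul_div_mul_left _ _ hc_pos.ne']
  simpa only [hscale] using hΦ.apply_mul_le hc (t := |f x| / (c * l)) (by positivity)

variable (hΦ : IsWeakPhi Φ a q) (hf : ∀ l, 0 < l → Integrable (fun x => Φ (|f x| / l)) μ)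
include hΦ hf

theorem exists_luxModular_le_one : ∃ l, 0 < l ∧ luxModular μ Φ f l ≤ 1 := by
  have ha := hΦ.one_le_a
  have hI := hΦ.luxModular_nonneg (μ := μ) (f := f) one_pos
  set c := 1 + a * luxModular μ Φ f 1
  have hc : 1 ≤ c := le_add_of_nonneg_right (by positivity)
  have hc_pos : 0 < c := one_pos.trans_le hc
  refine ⟨c * 1, by positivity, (hΦ.luxModular_mul_le (hf 1 one_pos) one_pos hc).trans ?_⟩
  rw [div_mul_eq_mul_div, div_le_one hc_pos]
  exact le_add_of_nonneg_left zero_le_one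

theorem luxNorm_le (hl : 0 < l) (hc : 1 ≤ c) (h : luxModular μ Φ f l ≤ c) :
    luxNorm μ Φ f ≤ a * c * l := by
  have ha := hΦ.one_le_a
  refine luxNorm_le_of_luxModular_le_one (by positivity)
    ((hΦ.luxModular_mul_le (hf l hl) hl (one_le_mul_of_one_le_of_one_le ha hc)).trans ?_)
  rw [div_mul_eq_mul_div, div_le_one (by positivity)]
  exact mul_le_mul_of_nonneg_left h (by positivity)

theorem le_luxNorm (hl : 0 < l) (hc : c ≤ 1) (h : c ≤ luxModular μ Φ f l) :
    a⁻¹ * c * l ≤ luxNorm μ Φ f := by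
  have ha := hΦ.one_le_a
  refine le_csInf (hΦ.exists_luxModular_le_one hf) fun s ⟨hs, hs_le⟩ => ?_
  rw [mul_assoc, inv_mul_le_iff₀ (by positivity)]
  rcases le_total l s with hls | hsl
  · calc c * l ≤ 1 * s := mul_le_mul hc hls hl.le zero_le_one
      _ ≤ a * s := mul_le_mul_of_nonneg_right ha hs.le
  · have hdecay := hΦ.luxModular_mul_le (hf s hs) hs ((one_le_div hs).2 hsl)
    rw [div_mul_cancel₀ _ hs.ne'] at hdecay
    have hle : c ≤ a / (l / s) :=
      (h.trans hdecay).trans (mul_le_of_le_one_right (by positivity) hs_le)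
    rwa [div_div_eq_mul_div, le_div_iff₀ hl] at hle

theorem luxModular_le_rpow_of_luxNorm_lt (hl : 0 < l) (hc : 1 ≤ c) (hlt : luxNorm μ Φ f < c * l) :
    luxModular μ Φ f l ≤ c ^ q := by
  obtain ⟨s, ⟨hs, hs_le⟩, hs_lt⟩ :=
    exists_lt_of_csInf_lt (hΦ.exists_luxModular_le_one hf) hlt
  exact (hΦ.luxModular_le_rpow_mul hf hl hc).trans (mul_le_of_le_one_right (by positivity)
    ((hΦ.luxModular_anti (hf s hs) hs hs_lt.le).trans hs_le))

variable {Y : Type*} [MeasurableSpace Y] {ν : Measure Y} {g : Y → ℝ} {δ : ℝ}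
  (hg : ∀ l, 0 < l → Integrable (fun x => Φ (|g x| / l)) ν)
  (hδ : 0 < δ)
  (hfg : ∀ l, 0 < l → luxModular μ Φ f l ≤ 2 ^ q → |luxModular ν Φ g l - luxModular μ Φ f l| ≤ δ)
include hg hδ hfg

theorem luxNorm_le_of_abs_luxModular_sub_le :
    luxNorm ν Φ g ≤ a * (1 + δ) * luxNorm μ Φ f := by
  have ha := hΦ.one_le_a
  rw [← div_le_iff₀' (by positivity)]
  refine le_of_forall_gt_imp_ge_of_dense fun l hl => ?_
  have hl_pos : 0 < l := (luxNorm_nonneg μ Φ f).trans_lt hl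
  have hf_le : luxModular μ Φ f l ≤ 1 := by
    simpa using hΦ.luxModular_le_rpow_of_luxNorm_lt hf hl_pos le_rfl (by rwa [one_mul])
  have herr := hfg l hl_pos
    (hf_le.trans (Real.one_le_rpow one_le_two (zero_le_one.trans hΦ.one_le_q)))
  rw [div_le_iff₀' (by positivity)]
  exact hΦ.luxNorm_le hg hl_pos (by linarith) (by linarith [(abs_le.1 herr).2])

theorem le_luxNorm_of_abs_luxModular_sub_le (hδ2 : δ < 1 / 2) :
    a⁻¹ * (1 - δ) ^ 2 * luxNorm μ Φ f ≤ luxNorm ν Φ g := by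
  rcases (luxNorm_nonneg μ Φ f).eq_or_lt with hzero | hpos
  · rw [← hzero, mul_zero]
    exact luxNorm_nonneg ν Φ g
  set l := (1 - δ) * luxNorm μ Φ f with hl
  have hl_pos : 0 < l := mul_pos (by linarith) hpos
  have hl_lt : l < luxNorm μ Φ f := mul_lt_of_lt_one_left hpos (by linarith)
  have hlt_two : luxNorm μ Φ f < 2 * l := by nlinarith
  have hf_gt := one_lt_luxModular_of_lt_luxNorm hl_pos hl_lt
  have herr := hfg l hl_pos (hΦ.luxModular_le_rpow_of_luxNorm_lt hf hl_pos one_le_two hlt_two)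
  calc a⁻¹ * (1 - δ) ^ 2 * luxNorm μ Φ f = a⁻¹ * (1 - δ) * l := by rw [hl]; ring
    _ ≤ luxNorm ν Φ g :=
        hΦ.le_luxNorm hg hl_pos (by linarith) (by linarith [(abs_le.1 herr).1])

end IsWeakPhi

end Luxemburg

theorem discLuxNorm_eq_luxNorm {m : ℕ} [NeZero m] {Ω : Type*} (Φ : ℝ → ℝ) (x : Fin m → Ω)
    (f : Ω → ℝ) :
    discLuxNorm Φ x f = luxNorm (uniformMeasure m) Φ (f ∘ x) := by
  simp only [discLuxNorm, luxNorm, integral_uniformMeasure, Function.comp_apply]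

theorem IsWeakPhi.discLuxNorm_bounds_of_abs_samplingError_le {Ω : Type*} [MeasurableSpace Ω]
    {μ : Measure Ω} {Φ : ℝ → ℝ} {a q ε : ℝ} {f : Ω → ℝ} {m : ℕ} [NeZero m] {x : Fin m → Ω}
    (hΦ : IsWeakPhi Φ a q) (hf : ∀ l, 0 < l → Integrable (fun y => Φ (|f y| / l)) μ) (hε : 0 < ε)
    (hε1 : ε < 1) (h : ∀ l, 0 < l → luxModular μ Φ f l ≤ 2 ^ q →
      |samplingError μ x fun y => Φ (|f y| / l)| ≤ ε / 2) :
    a⁻¹ * (1 - ε) * luxNorm μ Φ f ≤ discLuxNorm Φ x f ∧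
      discLuxNorm Φ x f ≤ a * (1 + ε) * luxNorm μ Φ f := by
  have ha := hΦ.one_le_a
  have hnorm := luxNorm_nonneg μ Φ f
  have hfx (l : ℝ) (_ : 0 < l) :
      Integrable (fun j => Φ (|(f ∘ x) j| / l)) (uniformMeasure m) := .of_finite
  have hclose (l : ℝ) (hl : 0 < l) (hI : luxModular μ Φ f l ≤ 2 ^ q) :
      |luxModular (uniformMeasure m) Φ (f ∘ x) l - luxModular μ Φ f l| ≤ ε / 2 := by
    rw [luxModular, integral_uniformMeasure]
    exact h l hl hI
  rw [discLuxNorm_eq_luxNorm]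
  constructor
  · calc a⁻¹ * (1 - ε) * luxNorm μ Φ f ≤ a⁻¹ * (1 - ε / 2) ^ 2 * luxNorm μ Φ f := by
          gcongr
          nlinarith
      _ ≤ luxNorm (uniformMeasure m) Φ (f ∘ x) :=
          hΦ.le_luxNorm_of_abs_luxModular_sub_le hf hfx (by positivity) hclose (by linarith)
  · calc luxNorm (uniformMeasure m) Φ (f ∘ x) ≤ a * (1 + ε / 2) * luxNorm μ Φ f :=
          hΦ.luxNorm_le_of_abs_luxModular_sub_le hf hfx (by positivity) hclose
      _ ≤ a * (1 + ε) * luxNorm μ Φ f := by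
          gcongr
          linarith

/-! ### Sampling discretization on function spaces -/

/-- The Nikolskii inequality `X ∈ NI_{2,∞}(H)` for a space `X` of measurable functions, with a
pointwise supremum. -/
structure IsNikolskii {Ω : Type*} [MeasurableSpace Ω] (μ : Measure Ω) (H : ℝ)
    (X : Submodule ℝ (Ω → ℝ)) : Prop where
  measurable : ∀ f ∈ X, Measurable f
  abs_le : ∀ f ∈ X, ∀ x, |f x| ≤ H * √(∫ y, f y ^ 2 ∂μ)

theorem abs_le_supNorm {Ω : Type*} [TopologicalSpace Ω] [CompactSpace Ω] {f : Ω → ℝ}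
    (hf : Continuous f) (x : Ω) : |f x| ≤ supNorm f :=
  le_ciSup (isCompact_range hf.abs).bddAbove x

theorem IsNikolskii.integrable_apply_abs_div {Ω : Type*} [MeasurableSpace Ω] {μ : Measure Ω}
    [IsFiniteMeasure μ] {H : ℝ} {X : Submodule ℝ (Ω → ℝ)} (hX : IsNikolskii μ H X) {Φ : ℝ → ℝ}
    (hΦ : IsPhiPrefun Φ) {f : Ω → ℝ} (hf : f ∈ X) {l : ℝ} (hl : 0 < l) :
    Integrable (fun x => Φ (|f x| / l)) μ := by
  simpa only [abs_div, abs_of_pos hl] using hΦ.integrable_comp_abs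
    ((hX.measurable f hf).div_const l) (B := H * √(∫ y, f y ^ 2 ∂μ) / l) fun x => by
      rw [abs_div, abs_of_pos hl]
      exact div_le_div_of_nonneg_right (hX.abs_le f hf x) hl.le

namespace IsWeakPhi

variable {Φ : ℝ → ℝ} {a q V : ℝ}

theorem exists_forall_mem_abs_samplingError_le (hΦ : IsWeakPhi Φ a q) (hV : 1 ≤ V) :
    ∃ C : ℝ, 0 < C ∧ ∀ {Ω : Type*} [MeasurableSpace Ω] (μ : Measure Ω) [IsProbabilityMeasure μ]
      (N : ℕ) (H ε : ℝ) (X : Submodule ℝ (Ω → ℝ)), 1 ≤ N → 1 ≤ H → 0 < ε → ε ≤ 1 / 2 →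
      Module.finrank ℝ X = N → IsNikolskii μ H X →
      ∃ m : ℕ, 0 < m ∧ m ≤ C * samplingRate Φ N H ε ∧ ∃ x : Fin m → Ω, ∀ f ∈ X,
        ∫ y, Φ |f y| ∂μ ≤ V → |samplingError μ x (fun y => Φ |f y|)| ≤ 2 * ε := by
  obtain ⟨C, hC, hsizes⟩ := hΦ.exists_sampleSizes_le_samplingRate (V := V) (by positivity)
  refine ⟨C, hC, fun {Ω} _ μ _ N H ε X hN hH hε hε2 hX_dim hX => ?_⟩
  obtain ⟨M, m, hm_pos, hm_le, hM, hM_sq, hm⟩ := hsizes N H ε hN hH hε hε2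
  have : FiniteDimensional ℝ X := Module.finite_of_finrank_pos (by lia)
  obtain ⟨E, K, r, _, hK, hr, hfinrank⟩ := exists_isParsevalFrame (μ := μ) (H := H)
    (by positivity) X.subtype (fun f => hX.measurable f f.2) fun f => hX.abs_le f f.2
  have hdim : (Module.finrank ℝ E : ℝ) ≤ 2 * 2 ^ Nat.log 2 N := by
    have hlog := Nat.lt_pow_succ_log_self one_lt_two N
    rw [pow_succ'] at hlog
    exact_mod_cast (hfinrank.trans_eq hX_dim).trans hlog.le
  obtain ⟨x, hx⟩ := hK.exists_forall_modularBall_abs_samplingError_le_two_mul hΦ (by positivity)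
    hV hε hε2 hM hM_sq hdim hm
  have hframe (f : X) : frameModular Φ K (r f) = fun y => Φ |(f : Ω → ℝ) y| := by
    ext y
    rw [frameModular, hr, Submodule.subtype_apply]
  refine ⟨m, hm_pos, hm_le, x, fun f hf hfV => ?_⟩
  rw [← hframe ⟨f, hf⟩] at hfV ⊢
  exact hx _ hfV

end IsWeakPhi

theorem statement2_general {Φ : ℝ → ℝ} {a q : ℝ} (hΦ : IsWeakPhi Φ a q) :
    ∃ C : ℝ, 0 < C ∧
      ∀ (Ω : Type*) [MeasurableSpace Ω] (μ : Measure Ω), IsProbabilityMeasure μ →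
      ∀ N : ℕ, 1 ≤ N → ∀ H : ℝ, 1 ≤ H →
      ∀ X : Submodule ℝ (Ω → ℝ), Module.finrank ℝ X = N → IsNikolskii μ H X →
      ∀ ε : ℝ, 0 < ε → ε ≤ 1 / 2 →
        ∃ m : ℕ, m ≤ C * samplingRate Φ N H ε ∧
          ∃ x : Fin m → Ω, ∀ f ∈ X,
            a⁻¹ * (1 - ε) * luxNorm μ Φ f ≤ discLuxNorm Φ x f ∧
            discLuxNorm Φ x f ≤ a * (1 + ε) * luxNorm μ Φ f := by
  obtain ⟨C, hC, hsample⟩ := hΦ.exists_forall_mem_abs_samplingError_le (V := 2 ^ q)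
    (Real.one_le_rpow one_le_two (zero_le_one.trans hΦ.one_le_q))
  refine ⟨48 * C, by positivity, fun Ω _ μ _ N hN H hH X hX_dim hX ε hε hε2 => ?_⟩
  obtain ⟨m, hm_pos, hm_le, x, hx⟩ := hsample μ N H (ε / 4) X hN hH (by positivity)
    (by linarith) hX_dim hX
  have : NeZero m := ⟨hm_pos.ne'⟩
  refine ⟨m, ?_, x, fun f hf => hΦ.discLuxNorm_bounds_of_abs_samplingError_le
    (fun l hl => hX.integrable_apply_abs_div hΦ.toIsPhiPrefun hf hl) hε (by linarith)
    fun l hl hI => ?_⟩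
  · calc (m : ℝ) ≤ C * samplingRate Φ N H (ε / 4) := hm_le
      _ ≤ C * (48 * samplingRate Φ N H ε) :=
          mul_le_mul_of_nonneg_left (hΦ.samplingRate_div_four_le hH hε hε2) hC.le
      _ = 48 * C * samplingRate Φ N H ε := by ring
  · have hscale (y : Ω) : |(l⁻¹ • f) y| = |f y| / l := by
      rw [Pi.smul_apply, smul_eq_mul, abs_mul, abs_inv, abs_of_pos hl, inv_mul_eq_div]
    have herr := hx (l⁻¹ • f) (X.smul_mem _ hf)
    simp only [hscale] at herr
    exact (herr hI).trans_eq (by ring)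

/-- Theorem 3.2 / t3.2. Let `Φ ∈ Φ_w` (with constant `a_Φ(1)`) be such that
`Φ ∈ (Dec)_q`, `q ∈ [1,∞)`. There is `C = C_Φ > 0` such that for every compact `Ω ⊂ ℝ^d` with
Borel probability measure `μ`, every `N ≥ 1`, `H ≥ 1`, every `N`-dimensional
`X_N ∈ NI_{2,∞}(H)`, and every `ε ∈ (0,1/2]`, there are
`m ≤ C ε^{-2} (log₂ ε⁻¹) Φ(H²) (log₂ 2N)² log₂ 2H²` points `x₁,…,x_m ∈ Ω` with
`a_Φ(1)⁻² (1−ε) ‖f‖_Φ ≤ ‖f‖_{Φ,x} ≤ a_Φ(1)² (1+ε) ‖f‖_Φ` for all `f ∈ X_N`. -/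
theorem statement2 (Φ : ℝ → ℝ) (hpre : IsPhiPrefun Φ)
    (a1 : ℝ) (ha1 : 1 ≤ a1) (hA1 : AIncP Φ 1 a1)
    (q : ℝ) (hq : 1 ≤ q) (hdec : DecQ Φ q) :
    ∃ C : ℝ, 0 < C ∧
      ∀ (d : ℕ) (Ω : Set (Fin d → ℝ)), IsCompact Ω →
      ∀ (μ : Measure Ω), IsProbabilityMeasure μ →
      ∀ N : ℕ, 1 ≤ N → ∀ H : ℝ, 1 ≤ H →
      ∀ X : Submodule ℝ (Ω → ℝ),
        (∀ f ∈ X, Continuous f) →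
        Module.finrank ℝ X = N →
        (∀ f ∈ X, supNorm f ≤ H * Real.sqrt (∫ y, (f y) ^ 2 ∂μ)) →
      ∀ ε : ℝ, 0 < ε → ε ≤ 1 / 2 →
        ∃ m : ℕ,
          (m : ℝ) ≤ C * ε⁻¹ ^ 2 * Real.logb 2 ε⁻¹ * Φ (H ^ 2) *
            (Real.logb 2 (2 * N)) ^ 2 * Real.logb 2 (2 * H ^ 2) ∧
          ∃ x : Fin m → Ω, ∀ f ∈ X,
            (a1⁻¹) ^ 2 * (1 - ε) * luxNorm μ Φ f ≤ discLuxNorm Φ x f ∧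
            discLuxNorm Φ x f ≤ a1 ^ 2 * (1 + ε) * luxNorm μ Φ f := by
  have hΦ : IsWeakPhi Φ a1 q := ⟨hpre, ha1, hA1, hq, hdec⟩
  obtain ⟨C, hC, hsample⟩ := statement2_general hΦ
  refine ⟨C, hC, fun d Ω hΩ μ hμ N hN H hH X hX_cont hX_dim hX ε hε hε2 => ?_⟩
  have : CompactSpace Ω := isCompact_iff_compactSpace.1 hΩ
  obtain ⟨m, hm, x, hx⟩ := hsample Ω μ hμ N hN H hH X hX_dim
    ⟨fun f hf => (hX_cont f hf).measurable,
      fun f hf y => (abs_le_supNorm (hX_cont f hf) y).trans (hX f hf)⟩ ε hε hε2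
  refine ⟨m, hm.trans_eq (by rw [samplingRate]; ring), x, fun f hf => ⟨?_, ?_⟩⟩
  · refine le_trans ?_ (hx f hf).1
    have hnorm := luxNorm_nonneg μ Φ f
    have ha_inv : a1⁻¹ ^ 2 ≤ a1⁻¹ :=
      pow_le_of_le_one (by positivity) (inv_le_one_of_one_le₀ ha1) two_ne_zero
    gcongr
    linarith
  · refine (hx f hf).2.trans ?_
    have hnorm := luxNorm_nonneg μ Φ f
    gcongr
    exact le_self_pow₀ ha1 two_ne_zero
end

section
/- Let a, b > 0, let X_N be an N-dimensional vector space equipped with a norm ‖·‖, and let F ⊂ X_N be a bounded subset. Then there is a constant C(a, b) > 0 depending only on a and b such that Σ_{n > ⌊log N⌋} (2^{an}·e_n(F, ‖·‖))^b ≤ C(a, b) · Σ_{n ≤ ⌊log N⌋} (2^{an}·e_n(F, ‖·‖))^b. -/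
open MeasureTheory

/-!
A `δ`-separated subset of `F` carries disjoint balls of radius `δ / 2`, all contained in the
`δ / 2`-thickening of `F`, which a cover of `F` by `ε`-balls places inside as many balls of radius
`ε + δ / 2`. Comparing volumes, the covering number of `F` grows at most by the factor
`(1 + 2 * ε / δ) ^ N` when the radius shrinks from `ε` to `δ`. If `N ≤ 2 ^ (L + 1)`, the choice
`δ / ε = 16 / 2 ^ 2 ^ m` keeps the number of balls below `2 ^ 2 ^ (L + 1 + m)`. Hence the entropy
numbers decay doubly exponentially beyond `L`, which beats the weights `2 ^ (a * n)`, and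
the tail is controlled by the single term of index `L`.
-/

section Entropy

open Metric Module Set Filter Bornology
open scoped NNReal ENNReal Topology Function

section Volume

variable {E : Type*} [NormedAddCommGroup E] [MeasurableSpace E] [BorelSpace E] {A : Set E}
  {δ ε : ℝ≥0}

theorem packingNumber_mul_measure_ball_le (μ : Measure E) [μ.IsAddHaarMeasure] :
    packingNumber ε A * μ (ball 0 (ε / 2)) ≤ μ (thickening (ε / 2) A) := by
  simp only [packingNumber, ENat.toENNReal_iSup, ENNReal.iSup_mul, iSup_le_iff]
  intro C hCA hC
  have disjoint_balls : Pairwise (Disjoint on fun c : C => ball (c : E) (ε / 2)) := by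
    intro c d hcd
    have hε : (ε : ℝ) < dist (c : E) d := by
      have hε_edist : (ε : ℝ≥0∞) < edist (c : E) d := hC c.2 d.2 (Subtype.coe_injective.ne hcd)
      rw [edist_nndist, ENNReal.coe_lt_coe] at hε_edist
      exact_mod_cast hε_edist
    exact ball_disjoint_ball (by linarith)
  calc (C.encard : ℝ≥0∞) * μ (ball 0 (ε / 2))
      = ∑' c : C, μ (ball (c : E) (ε / 2)) := by
        simp only [μ.addHaar_ball_center, ENNReal.tsum_const, ENat.card_coe_set_eq]
    _ ≤ μ (⋃ c : C, ball (c : E) (ε / 2)) :=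
        tsum_meas_le_meas_iUnion_of_disjoint μ (fun _ => measurableSet_ball) disjoint_balls
    _ ≤ μ (thickening (ε / 2) A) :=
        measure_mono (iUnion_subset fun c => ball_subset_thickening (hCA c.2) _)

theorem measure_thickening_le_coveringNumber_mul (μ : Measure E) [μ.IsAddHaarMeasure]
    {r : ℝ} (hr : 0 < r) :
    μ (thickening r A) ≤ coveringNumber ε A * μ (ball 0 (ε + r)) := by
  rcases eq_or_ne (coveringNumber ε A) ⊤ with htop | htop
  · have hball : μ (ball 0 (ε + r)) ≠ 0 := (measure_ball_pos μ _ (by positivity)).ne'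
    simp [htop, ENNReal.top_mul hball]
  have hfin := finite_minimalCover (ε := ε) (A := A)
  have thickening_subset : thickening r A ⊆ ⋃ c ∈ hfin.toFinset, ball c (ε + r) := by
    intro x hx
    obtain ⟨y, hyA, hxy⟩ := mem_thickening_iff.1 hx
    obtain ⟨c, hc, hyc⟩ := mem_iUnion₂.1
      ((isCover_minimalCover htop).subset_iUnion_closedBall hyA)
    refine mem_iUnion₂.2 ⟨c, hfin.mem_toFinset.2 hc, ?_⟩
    calc dist x c ≤ dist x y + dist y c := dist_triangle ..
      _ < ε + r := by linarith [mem_closedBall.1 hyc]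
  calc μ (thickening r A)
      ≤ ∑ c ∈ hfin.toFinset, μ (ball c (ε + r)) :=
        (measure_mono thickening_subset).trans (measure_biUnion_finset_le _ _)
    _ = coveringNumber ε A * μ (ball 0 (ε + r)) := by
        simp only [μ.addHaar_ball_center, Finset.sum_const, nsmul_eq_mul]
        rw [← encard_minimalCover htop, hfin.encard_eq_coe_toFinset_card, ENat.toENNReal_coe]

end Volume

theorem coveringNumber_le_mul_coveringNumber {E : Type*} [NormedAddCommGroup E] [NormedSpace ℝ E]
    [FiniteDimensional ℝ E] (A : Set E) {δ : ℝ≥0} (hδ : 0 < δ) (ε : ℝ≥0) :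
    (coveringNumber δ A : ℝ≥0∞) ≤
      coveringNumber ε A * ((1 + 2 * ε / δ) ^ finrank ℝ E : ℝ≥0) := by
  borelize E
  let μ : Measure E := Measure.addHaar
  have hball : ball (0 : E) (ε + δ / 2) = ball 0 ((1 + 2 * ε / δ : ℝ≥0) * (δ / 2 : ℝ)) := by
    congr 1
    push_cast
    field_simp
    ring
  have hscale : μ (ball 0 (ε + δ / 2)) =
      ((1 + 2 * ε / δ) ^ finrank ℝ E : ℝ≥0) * μ (ball 0 (δ / 2)) := by
    rw [hball, μ.addHaar_ball_mul_of_pos _ (by positivity), ← NNReal.coe_pow,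
      ENNReal.ofReal_coe_nnreal]
  have hpos : μ (ball 0 (δ / 2)) ≠ 0 := (measure_ball_pos μ _ (by positivity)).ne'
  refine (ENNReal.mul_le_mul_iff_left hpos measure_ball_lt_top.ne).1 ?_
  calc (coveringNumber δ A : ℝ≥0∞) * μ (ball 0 (δ / 2))
      ≤ packingNumber δ A * μ (ball 0 (δ / 2)) := by
        gcongr
        exact coveringNumber_le_packingNumber δ A
    _ ≤ μ (thickening (δ / 2) A) := packingNumber_mul_measure_ball_le μ
    _ ≤ coveringNumber ε A * μ (ball 0 (ε + δ / 2)) :=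
        measure_thickening_le_coveringNumber_mul μ (by positivity)
    _ = coveringNumber ε A * ((1 + 2 * ε / δ) ^ finrank ℝ E : ℝ≥0) * μ (ball 0 (δ / 2)) := by
        rw [hscale, mul_assoc]

/-- The number `N_n` of balls allowed in the `n`-th entropy number: `N₀ = 1` and
`N_n = 2 ^ 2 ^ n` for `n ≥ 1`. -/
def entropyCard (n : ℕ) : ℕ := if n = 0 then 1 else 2 ^ 2 ^ n

theorem one_le_entropyCard (n : ℕ) : 1 ≤ entropyCard n := by
  rw [entropyCard]
  split_ifs
  exacts [le_rfl, Nat.one_le_two_pow]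

theorem entropyCard_le (n : ℕ) : entropyCard n ≤ 2 ^ 2 ^ n := by
  rw [entropyCard]
  split_ifs
  exacts [Nat.one_le_two_pow, le_rfl]

theorem entropyCard_of_ne_zero {n : ℕ} (hn : n ≠ 0) : entropyCard n = 2 ^ 2 ^ n := if_neg hn

section CoveringNumber

variable {X : Type*} [PseudoMetricSpace X] {F : Set X} {n : ℕ}

theorem entropyNumD_dist_nonneg (F : Set X) (n : ℕ) : 0 ≤ entropyNumD dist F n :=
  Real.sInf_nonneg fun _ hε => hε.1.le

theorem exists_finset_cover_card_le_entropyCard (hF : IsBounded F) (n : ℕ) :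
    ∃ ε : ℝ, 0 < ε ∧ ∃ T : Finset X, ↑T ⊆ F ∧ T.card ≤ entropyCard n ∧
      ∀ f ∈ F, ∃ g ∈ T, dist f g < ε := by
  rcases F.eq_empty_or_nonempty with rfl | ⟨x, hx⟩
  · exact ⟨1, one_pos, ∅, by simp⟩
  · refine ⟨diam F + 1, by positivity, {x}, by simpa using hx, one_le_entropyCard n, ?_⟩
    exact fun f hf => ⟨x, Finset.mem_singleton_self x,
      (dist_le_diam_of_mem hF hf hx).trans_lt (lt_add_one _)⟩

theorem entropyNumD_dist_le_of_coveringNumber_le {ε : ℝ≥0}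
    (h : coveringNumber ε F ≤ entropyCard n) : entropyNumD dist F n ≤ ε := by
  have htop : coveringNumber ε F ≠ ⊤ := (h.trans_lt (ENat.natCast_lt_top _)).ne
  have hfin := finite_minimalCover (ε := ε) (A := F)
  -- Entropy numbers use open balls and covering numbers closed ones, so the radius is enlarged.
  refine le_of_forall_gt_imp_ge_of_dense fun δ hδ => csInf_le ⟨0, fun _ hr => hr.1.le⟩
    ⟨ε.2.trans_lt hδ, hfin.toFinset, ?_, ?_, fun f hf => ?_⟩
  · simpa using minimalCover_subset
  · rw [← encard_minimalCover htop, hfin.encard_eq_coe_toFinset_card] at h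
    exact_mod_cast h
  · obtain ⟨c, hc, hfc⟩ := mem_iUnion₂.1
      ((isCover_minimalCover htop).subset_iUnion_closedBall hf)
    exact ⟨c, hfin.mem_toFinset.2 hc, (mem_closedBall.1 hfc).trans_lt hδ⟩

theorem coveringNumber_le_of_entropyNumD_dist_lt (hF : IsBounded F) {ε : ℝ≥0}
    (h : entropyNumD dist F n < ε) : coveringNumber ε F ≤ entropyCard n := by
  obtain ⟨r, ⟨-, T, hTF, hcard, hcover⟩, hrε⟩ :=
    exists_lt_of_csInf_lt (exists_finset_cover_card_le_entropyCard hF n) h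
  have hT : IsCover ε F (T : Set X) := .of_subset_iUnion_closedBall fun f hf => by
    obtain ⟨g, hg, hfg⟩ := hcover f hf
    exact mem_iUnion₂.2 ⟨g, hg, (hfg.trans hrε).le⟩
  calc coveringNumber ε F ≤ (T : Set X).encard := hT.coveringNumber_le_encard hTF
    _ = T.card := encard_coe_eq_coe_finsetCard T
    _ ≤ entropyCard n := mod_cast hcard

end CoveringNumber

section Decay

/-- A bound for the ratio of the entropy numbers of indices `L + 1 + m` and `L` in dimension at
most `2 ^ (L + 1)`. The constant `16` is large enough for the volume count to start at `m = 0`. -/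
noncomputable def entropyDecay (m : ℕ) : ℝ≥0 := 16 / 2 ^ 2 ^ m

theorem entropyDecay_pos (m : ℕ) : 0 < entropyDecay m := by
  rw [entropyDecay]
  positivity

theorem two_pow_mul_entropyDecay_le {L N : ℕ} (hN : N ≤ 2 ^ (L + 1)) (m : ℕ) :
    2 ^ 2 ^ L * (1 + 2 / entropyDecay m) ^ N ≤ 2 ^ 2 ^ (L + 1 + m) := by
  have base_le : 2 * (1 + 2 / entropyDecay m) ^ 2 ≤ ((2 : ℝ≥0) ^ 2 ^ m) ^ 2 := by
    have two_le : (2 : ℝ) ≤ 2 ^ 2 ^ m := le_self_pow₀ one_le_two (by positivity)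
    rw [entropyDecay, ← NNReal.coe_le_coe]
    push_cast
    generalize (2 : ℝ) ^ 2 ^ m = y at two_le
    field_simp
    nlinarith
  calc 2 ^ 2 ^ L * (1 + 2 / entropyDecay m) ^ N
      ≤ 2 ^ 2 ^ L * (1 + 2 / entropyDecay m) ^ 2 ^ (L + 1) := by
        gcongr
        exact le_self_add
    _ = (2 * (1 + 2 / entropyDecay m) ^ 2) ^ 2 ^ L := by
        rw [mul_pow, ← pow_mul, pow_succ' 2 L]
    _ ≤ (((2 : ℝ≥0) ^ 2 ^ m) ^ 2) ^ 2 ^ L := by gcongr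
    _ = 2 ^ 2 ^ (L + 1 + m) := by
        rw [← pow_mul, ← pow_mul]
        ring_nf

theorem entropyNumD_dist_le_entropyDecay_mul {X : Type*} [NormedAddCommGroup X] [NormedSpace ℝ X]
    [FiniteDimensional ℝ X] {L : ℕ} (hL : finrank ℝ X ≤ 2 ^ (L + 1)) {F : Set X}
    (hF : IsBounded F) (m : ℕ) :
    entropyNumD dist F (L + 1 + m) ≤ entropyDecay m * entropyNumD dist F L := by
  have hq := entropyDecay_pos m
  suffices h : ∀ r : ℝ, entropyNumD dist F L < r →
      entropyNumD dist F (L + 1 + m) / entropyDecay m ≤ r by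
    rw [← div_le_iff₀' (by exact_mod_cast hq)]
    exact le_of_forall_gt_imp_ge_of_dense h
  intro r hr
  have hr0 : 0 < r := (entropyNumD_dist_nonneg F L).trans_lt hr
  lift r to ℝ≥0 using hr0.le
  have hr0 : 0 < r := by exact_mod_cast hr0
  rw [div_le_iff₀' (by exact_mod_cast hq), ← NNReal.coe_mul]
  apply entropyNumD_dist_le_of_coveringNumber_le
  have hcover : (coveringNumber r F : ℝ≥0∞) ≤ (2 ^ 2 ^ L : ℝ≥0) :=
    calc (coveringNumber r F : ℝ≥0∞) ≤ ((entropyCard L : ℕ∞) : ℝ≥0∞) :=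
          ENat.toENNReal_le.2 (coveringNumber_le_of_entropyNumD_dist_lt hF hr)
      _ = (entropyCard L : ℝ≥0) := by norm_cast
      _ ≤ (2 ^ 2 ^ L : ℝ≥0) := by exact_mod_cast entropyCard_le L
  rw [entropyCard_of_ne_zero (by omega), ← ENat.toENNReal_le]
  calc (coveringNumber (entropyDecay m * r) F : ℝ≥0∞)
      ≤ coveringNumber r F * ((1 + 2 * r / (entropyDecay m * r)) ^ finrank ℝ X : ℝ≥0) :=
        coveringNumber_le_mul_coveringNumber F (by positivity) r
    _ = coveringNumber r F * ((1 + 2 / entropyDecay m) ^ finrank ℝ X : ℝ≥0) := by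
        rw [mul_div_mul_right _ _ hr0.ne']
    _ ≤ (2 ^ 2 ^ L : ℝ≥0) * ((1 + 2 / entropyDecay m) ^ finrank ℝ X : ℝ≥0) := by gcongr
    _ ≤ (2 ^ 2 ^ (L + 1 + m) : ℝ≥0) := by exact_mod_cast two_pow_mul_entropyDecay_le hL m
    _ = ((2 ^ 2 ^ (L + 1 + m) : ℕ) : ℕ∞) := by norm_cast

end Decay

section Tail

theorem support_ite_lt_subset_range {M : Type*} [Zero M] (L : ℕ) (t : ℕ → M) :
    Function.support (fun n => if L < n then t n else 0) ⊆ range fun m => L + 1 + m := by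
  intro n hn
  have hLn : L < n := by
    by_contra h
    exact hn (if_neg h)
  exact ⟨n - (L + 1), by grind⟩

variable {M : Type*} [AddCommMonoid M] [TopologicalSpace M]

theorem tsum_ite_lt (L : ℕ) (t : ℕ → M) :
    (∑' n, if L < n then t n else 0) = ∑' m, t (L + 1 + m) := by
  rw [← (add_right_injective (L + 1)).tsum_eq (support_ite_lt_subset_range L t)]
  exact tsum_congr fun m => if_pos (by grind)

theorem summable_ite_lt_iff (L : ℕ) (t : ℕ → M) :
    (Summable fun n => if L < n then t n else 0) ↔ Summable fun m => t (L + 1 + m) := by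
  rw [← (add_right_injective (L + 1)).summable_iff
    (Function.support_subset_iff'.1 (support_ite_lt_subset_range L t))]
  exact summable_congr fun m => if_pos (by grind)

end Tail

section WeightedSum

/-- The `m`-th summand of the constant `C(a, b)`: a bound for the ratio of the terms of indices
`L + 1 + m` and `L` of the weighted sum of entropy numbers. -/
noncomputable def tailWeight (a b : ℝ) (m : ℕ) : ℝ := (2 ^ (a * (m + 1)) * entropyDecay m) ^ b

theorem tailWeight_pos (a b : ℝ) (m : ℕ) : 0 < tailWeight a b m := by
  have := entropyDecay_pos m
  rw [tailWeight]
  positivity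

theorem tailWeight_succ_div (a b : ℝ) (m : ℕ) :
    tailWeight a b (m + 1) / tailWeight a b m = (2 ^ a / 2 ^ 2 ^ m) ^ b := by
  rw [tailWeight, tailWeight, ← Real.div_rpow (by positivity) (by positivity)]
  congr 1
  have weight_succ : (2 : ℝ) ^ (a * ((m + 1 : ℕ) + 1)) = 2 ^ (a * (m + 1)) * 2 ^ a := by
    rw [← Real.rpow_add two_pos]
    push_cast
    ring_nf
  have two_pow_succ : (2 : ℝ) ^ 2 ^ (m + 1) = 2 ^ 2 ^ m * 2 ^ 2 ^ m := by ring
  rw [weight_succ, entropyDecay, entropyDecay]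
  push_cast
  rw [two_pow_succ]
  field_simp

theorem summable_tailWeight (a : ℝ) {b : ℝ} (hb : 0 < b) : Summable (tailWeight a b) := by
  refine summable_of_ratio_test_tendsto_lt_one one_pos
    (.of_forall fun m => (tailWeight_pos a b m).ne') ?_
  simp only [Real.norm_of_nonneg (tailWeight_pos a b _).le, tailWeight_succ_div]
  have two_pow_atTop : Tendsto (fun m : ℕ => (2 : ℝ) ^ 2 ^ m) atTop atTop :=
    (tendsto_pow_atTop_atTop_of_one_lt one_lt_two).comp
      (tendsto_pow_atTop_atTop_of_one_lt one_lt_two)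
  simpa only [Real.zero_rpow hb.ne'] using
    (two_pow_atTop.const_div_atTop (2 ^ a)).rpow_const (.inr hb.le)

variable {X : Type*} [NormedAddCommGroup X] [NormedSpace ℝ X] [FiniteDimensional ℝ X] {L : ℕ}
  {F : Set X}

theorem weighted_entropyNumD_dist_le_tailWeight_mul (a : ℝ) {b : ℝ} (hb : 0 ≤ b)
    (hL : finrank ℝ X ≤ 2 ^ (L + 1)) (hF : IsBounded F) (m : ℕ) :
    ((2 : ℝ) ^ (a * (L + 1 + m : ℕ)) * entropyNumD dist F (L + 1 + m)) ^ b ≤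
      tailWeight a b m * ((2 : ℝ) ^ (a * L) * entropyNumD dist F L) ^ b := by
  have weight_split : (2 : ℝ) ^ (a * (L + 1 + m : ℕ)) = 2 ^ (a * (m + 1)) * 2 ^ (a * L) := by
    rw [← Real.rpow_add two_pos]
    push_cast
    ring_nf
  have hL0 := entropyNumD_dist_nonneg F L
  have hm0 := entropyNumD_dist_nonneg F (L + 1 + m)
  rw [tailWeight, ← Real.mul_rpow (by positivity) (by positivity)]
  refine Real.rpow_le_rpow (by positivity) ?_ hb
  calc (2 : ℝ) ^ (a * (L + 1 + m : ℕ)) * entropyNumD dist F (L + 1 + m)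
      ≤ 2 ^ (a * (m + 1)) * 2 ^ (a * L) * (entropyDecay m * entropyNumD dist F L) := by
        rw [weight_split]
        gcongr
        exact entropyNumD_dist_le_entropyDecay_mul hL hF m
    _ = 2 ^ (a * (m + 1)) * entropyDecay m * (2 ^ (a * L) * entropyNumD dist F L) := by ring

end WeightedSum

theorem statement6_general.{u} (a : ℝ) {b : ℝ} (hb : 0 < b) :
    ∃ C : ℝ, 0 < C ∧ ∀ (X : Type u) [NormedAddCommGroup X] [NormedSpace ℝ X]
      [FiniteDimensional ℝ X] (L : ℕ), finrank ℝ X ≤ 2 ^ (L + 1) →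
      ∀ F : Set X, IsBounded F →
        (Summable fun n : ℕ => if L < n then
          ((2 : ℝ) ^ (a * n) * entropyNumD (fun f g => ‖f - g‖) F n) ^ b else 0) ∧
        (∑' n : ℕ, if L < n then
          ((2 : ℝ) ^ (a * n) * entropyNumD (fun f g => ‖f - g‖) F n) ^ b else 0) ≤
          C * ((2 : ℝ) ^ (a * L) * entropyNumD (fun f g => ‖f - g‖) F L) ^ b := by
  have hw := summable_tailWeight a hb
  refine ⟨∑' m, tailWeight a b m,
    hw.tsum_pos (fun m => (tailWeight_pos a b m).le) 0 (tailWeight_pos a b 0), ?_⟩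
  intro X _ _ _ L hL F hF
  simp only [← dist_eq_norm]
  have hterm := weighted_entropyNumD_dist_le_tailWeight_mul a hb.le hL hF
  have htail := Summable.of_nonneg_of_le
    (fun m => Real.rpow_nonneg
      (mul_nonneg (by positivity) (entropyNumD_dist_nonneg F (L + 1 + m))) b)
    hterm (hw.mul_right _)
  refine ⟨(summable_ite_lt_iff L _).2 htail, ?_⟩
  rw [tsum_ite_lt, ← tsum_mul_right]
  exact htail.tsum_le_tsum hterm (hw.mul_right _)

end Entropy

/-- Lemma lem4. For `a, b > 0` there is `C(a,b) > 0` such that for every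
`N`-dimensional normed space `X_N` and every bounded `F ⊂ X_N`,
`Σ_{n > ⌊log₂ N⌋} (2^{an} e_n(F))^b ≤ C(a,b) Σ_{n ≤ ⌊log₂ N⌋} (2^{an} e_n(F))^b`. -/
theorem statement6 (a b : ℝ) (ha : 0 < a) (hb : 0 < b) :
    ∃ C : ℝ, 0 < C ∧
      ∀ (X : Type) [NormedAddCommGroup X] [NormedSpace ℝ X],
      ∀ N : ℕ, 1 ≤ N → Module.finrank ℝ X = N →
      ∀ F : Set X, Bornology.IsBounded F →
        (∑' n : ℕ, if Nat.log 2 N < n then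
            ((2 : ℝ) ^ (a * (n : ℝ)) * entropyNumD (fun f g => ‖f - g‖) F n) ^ b else 0) ≤
          C * ∑ n ∈ Finset.range (Nat.log 2 N + 1),
            ((2 : ℝ) ^ (a * (n : ℝ)) * entropyNumD (fun f g => ‖f - g‖) F n) ^ b := by
  obtain ⟨C, hC, tail_le⟩ := statement6_general a hb
  refine ⟨C, hC, fun X _ _ N hN hfin F hF => ?_⟩
  have : FiniteDimensional ℝ X := Module.finite_of_finrank_pos (by omega)
  have hL : Module.finrank ℝ X ≤ 2 ^ (Nat.log 2 N + 1) :=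
    hfin ▸ (Nat.lt_pow_succ_log_self one_lt_two N).le
  refine (tail_le X _ hL F hF).2.trans ?_
  gcongr
  have term_nonneg (n : ℕ) : 0 ≤ entropyNumD (fun f g => ‖f - g‖) F n := by
    simpa only [← dist_eq_norm] using entropyNumD_dist_nonneg F n
  exact Finset.single_le_sum (f := fun n : ℕ =>
      ((2 : ℝ) ^ (a * (n : ℝ)) * entropyNumD (fun f g => ‖f - g‖) F n) ^ b)
    (fun n _ => Real.rpow_nonneg (mul_nonneg (by positivity) (term_nonneg n)) b)
    (Finset.self_mem_range_succ _)
end
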